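/- arXiv:2404.05864 — 2 statements merged into one kernel-verified Lean document; each statement's English description precedes it below -/
import Mathlib

section
/- There exists an absolute constant C > 0 such that the following holds for all integers n ≥ 3, k ≥ 1 and all δ ∈ (0,1): if there exists a binary linear (3,δ)-LCC of block length n and dimension k, then k ≤ C · δ^{-2} · (log₂ n)² · log₂ log₂ n. -/
/-- A binary linear `(r, δ)`-LCC of block length `n` and dimension `k`:
a full-rank matrix whose rows `v 1, …, v n ∈ F₂ᵏ` span `F₂ᵏ`, together with
`r`-uniform matchings `H i` over `[n]` (families of pairwise disjoint
`r`-element subsets of `[n]`) of size at least `δ·n`, such that each hyperedge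
`{a₁,…,a_r} ∈ H i` satisfies `v i = v a₁ + ⋯ + v a_r`. -/
def IsBinaryLCC (r : ℕ) (δ : ℝ) {n k : ℕ} (v : Fin n → Fin k → ZMod 2)
    (H : Fin n → Finset (Finset (Fin n))) : Prop :=
  Submodule.span (ZMod 2) (Set.range v) = ⊤ ∧
  (∀ i : Fin n, ∀ e ∈ H i, e.card = r) ∧
  (∀ i : Fin n, ∀ e ∈ H i, ∀ e' ∈ H i, e ≠ e' → Disjoint e e') ∧
  (∀ i : Fin n, δ * n ≤ ((H i).card : ℝ)) ∧
  (∀ i : Fin n, ∀ e ∈ H i, v i = ∑ a ∈ e, v a)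

/-!
A minimal nonempty vertex set `P` with `∑ᵢ |H i[P]| ≥ |P| * (A * log |P| + B)` inner edges expands:
it has at least `B * |P|` inner edges, and the number of edges crossing any `X ⊆ P` is at least
`A * |X| * log (|P| / |X|)`. Explore `P` from a vertex `x` using a random set `Q` of
`O(δ⁻¹ log n log log n)` labels, each label at most once: crossing edges shrink the expected deficit
`log (|P| / |reached|)` geometrically, until more than half of `P` is reached.

A matching has at most `|P| / 3` edges inside `P`, so two different labels `i₁`, `i₂` have edges
inside `P`. Explore from their six vertices with pairwise disjoint label sets and pair the vertices
of the two edges. The two explorations of a pair meet, since each covers more than half of `P`.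
This rewrites `v i₁ + v i₂ + ∑_{i ∈ T} v i`, where `T` is the set of other labels used, as a sum of
at most `|T|` vectors, two fewer than before. Hence sums of more than `O(δ⁻¹ log n log log n)`
vectors can always be shortened, and counting short sums bounds `2 ^ k`.
-/

open Finset Module
open scoped BigOperators Pointwise symmDiff

section ShortSums

variable {α V : Type*} [AddCommGroup V]

/-- The vectors that are sums of at most `m` vectors of the family `v`. The summands are indexed by
a `Finset`, so each is used at most once; in characteristic two this is no restriction. -/
def shortSums (v : α → V) (m : ℕ) : Set V :=
  {w | ∃ S : Finset α, #S ≤ m ∧ ∑ a ∈ S, v a = w}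

theorem ncard_shortSums_le [Fintype α] (v : α → V) (m : ℕ) :
    (shortSums v m).ncard ≤ (Fintype.card α + 1) ^ m := by
  classical
  let A : Finset V := insert 0 (univ.image v)
  have hsub : shortSums v m ⊆ ((m • A : Finset V) : Set V) := by
    rintro _ ⟨S, hS, rfl⟩
    have hmem : ∑ a ∈ S, v a ∈ ∑ _a ∈ S, (A : Set V) :=
      Set.finsetSum_mem_finsetSum _ _ _ fun a _ =>
        mem_insert_of_mem (mem_image_of_mem v (mem_univ a))
    rw [sum_const, ← coe_nsmul] at hmem
    exact nsmul_subset_nsmul_right (mem_insert_self 0 _) hS hmem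
  calc (shortSums v m).ncard ≤ #(m • A) := by
        rw [← Set.ncard_coe_finset]
        exact Set.ncard_le_ncard hsub (finite_toSet _)
    _ ≤ #A ^ m := card_nsmul_le
    _ ≤ (Fintype.card α + 1) ^ m := by
      gcongr
      exact (card_insert_le _ _).trans (Nat.succ_le_succ card_image_le)

variable [Module (ZMod 2) V] {v : α → V} {l m : ℕ} {x y : V}

theorem sum_symmDiff_eq_add [DecidableEq α] (f : α → V) (S T : Finset α) :
    ∑ a ∈ S ∆ T, f a = ∑ a ∈ S, f a + ∑ a ∈ T, f a := by
  rw [symmDiff_def, sup_eq_union, sum_union disjoint_sdiff_sdiff,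
    ← sum_inter_add_sum_sdiff S T, ← sum_inter_add_sum_sdiff T S, inter_comm T S, add_add_add_comm,
    ZModModule.add_self, zero_add]

theorem card_symmDiff_le_add [DecidableEq α] (S T : Finset α) : #(S ∆ T) ≤ #S + #T :=
  (card_union_le _ _).trans (add_le_add (card_le_card sdiff_subset) (card_le_card sdiff_subset))

theorem add_mem_shortSums (hx : x ∈ shortSums v l) (hy : y ∈ shortSums v m) :
    x + y ∈ shortSums v (l + m) := by
  classical
  obtain ⟨S, hS, rfl⟩ := hx
  obtain ⟨T, hT, rfl⟩ := hy
  exact ⟨S ∆ T, (card_symmDiff_le_add S T).trans (add_le_add hS hT), sum_symmDiff_eq_add v S T⟩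

theorem sum_mem_shortSums {κ : Type*} {s : Finset κ} {w : κ → V} {m : κ → ℕ}
    (h : ∀ j ∈ s, w j ∈ shortSums v (m j)) : ∑ j ∈ s, w j ∈ shortSums v (∑ j ∈ s, m j) := by
  classical
  induction s using Finset.induction_on with
  | empty => exact ⟨∅, by simp⟩
  | insert j s hj ih =>
    rw [sum_insert hj, sum_insert hj]
    exact add_mem_shortSums (h j (mem_insert_self j s))
      (ih fun i hi => h i (mem_insert_of_mem hi))

theorem exists_finset_sum_eq_of_mem_span (hx : x ∈ Submodule.span (ZMod 2) (Set.range v)) :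
    ∃ S : Finset α, ∑ a ∈ S, v a = x := by
  obtain ⟨c, rfl⟩ := Finsupp.mem_span_range_iff_exists_finsupp.1 hx
  have hc {a : α} (ha : a ∈ c.support) : c a = 1 :=
    Fin.eq_one_of_ne_zero _ (Finsupp.mem_support_iff.1 ha)
  exact ⟨c.support, sum_congr rfl fun a ha => by simp only [hc ha, one_smul]⟩

theorem span_subset_shortSums {t : ℕ}
    (hred : ∀ S : Finset α, t < #S → ∃ m < #S, ∑ a ∈ S, v a ∈ shortSums v m) :
    (Submodule.span (ZMod 2) (Set.range v) : Set V) ⊆ shortSums v t := by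
  suffices h : ∀ (m : ℕ) (S : Finset α), #S ≤ m → ∑ a ∈ S, v a ∈ shortSums v t by
    intro x hx
    obtain ⟨S, rfl⟩ := exists_finset_sum_eq_of_mem_span hx
    exact h #S S le_rfl
  intro m
  induction m with
  | zero => exact fun S hS => ⟨S, hS.trans t.zero_le, rfl⟩
  | succ m ih =>
    intro S hS
    by_cases hSt : #S ≤ t
    · exact ⟨S, hSt, rfl⟩
    obtain ⟨l, hl, S', hS', hsum⟩ := hred S (not_le.1 hSt)
    rw [← hsum]
    exact ih S' (by omega)

theorem two_pow_finrank_span_le [Fintype α] {t : ℕ}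
    (hred : ∀ S : Finset α, t < #S → ∃ m < #S, ∑ a ∈ S, v a ∈ shortSums v m) :
    2 ^ finrank (ZMod 2) (Submodule.span (ZMod 2) (Set.range v)) ≤ (Fintype.card α + 1) ^ t := by
  have hfin : Module.Finite (ZMod 2) (Submodule.span (ZMod 2) (Set.range v)) :=
    Module.Finite.span_of_finite _ (Set.finite_range v)
  have hcard : Nat.card (Submodule.span (ZMod 2) (Set.range v)) = _ :=
    natCard_eq_pow_finrank (K := ZMod 2)
  rw [Nat.card_zmod] at hcard
  rw [← hcard]
  have hfin' : (shortSums v t).Finite :=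
    (Set.finite_range fun S : Finset α => ∑ a ∈ S, v a).subset fun w ⟨S, _, hS⟩ => ⟨S, hS⟩
  exact (Set.ncard_le_ncard (span_subset_shortSums hred) hfin').trans (ncard_shortSums_le v t)

end ShortSums

section PermExpect

theorem exists_perm_map_eq {ι : Type*} [Finite ι] {B B' : Finset ι} (h : #B = #B') :
    ∃ π : Equiv.Perm ι, B.map π.toEmbedding = B' := by
  classical
  let e : {i // i ∈ B} ≃ {i // i ∈ B'} := equivOfCardEq h
  refine ⟨e.extendSubtype, eq_of_subset_of_card_le ?_ (by rw [card_map, h])⟩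
  rw [map_subset_iff_subset_preimage]
  intro i hi
  simpa using e.extendSubtype_mem i hi

variable {ι : Type*} [Fintype ι] [DecidableEq ι]

/-- The average of a set function `F` over all images of `B` under permutations, i.e. over all sets
of the size of `B`. Averaging over permutations rather than over sets allows several disjoint sets
to be randomised simultaneously. -/
noncomputable def permExpect (F : Finset ι → ℝ) (B : Finset ι) : ℝ :=
  𝔼 σ : Equiv.Perm ι, F (B.map σ.toEmbedding)

variable {F : Finset ι → ℝ} {B B' B₀ B₁ B₂ : Finset ι}

theorem permExpect_le_of_card_le (hF : Antitone F) (h : #B ≤ #B') :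
    permExpect F B' ≤ permExpect F B := by
  obtain ⟨B'', hB'', hcard⟩ := exists_subset_card_eq h
  obtain ⟨π, rfl⟩ := exists_perm_map_eq hcard.symm
  calc permExpect F B' ≤ permExpect F (B.map π.toEmbedding) :=
        expect_le_expect fun σ _ => hF (map_subset_map.2 hB'')
    _ = permExpect F B := Fintype.expect_equiv (Equiv.mulRight π) _ _ fun σ => by
        rw [map_map]; rfl

theorem expect_sum_erase_sub_insert (F : Finset ι → ℝ) (B : Finset ι) :
    𝔼 σ : Equiv.Perm ι, ∑ i, (F ((B.map σ.toEmbedding).erase i) -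
        F (insert i (B.map σ.toEmbedding))) =
      ∑ i, (permExpect F (B.erase i) - permExpect F (insert i B)) := by
  have hreindex (σ : Equiv.Perm ι) : ∑ i, (F ((B.map σ.toEmbedding).erase i) -
      F (insert i (B.map σ.toEmbedding))) =
      ∑ i, (F ((B.erase i).map σ.toEmbedding) - F ((insert i B).map σ.toEmbedding)) := by
    rw [← Equiv.sum_comp σ]
    simp only [map_erase, map_insert, Equiv.coe_toEmbedding]
  simp only [hreindex, expect_sum_comm, expect_sub_distrib, permExpect]

theorem permExpect_contraction {a b : ℝ} (hF : Antitone F) (ha : 0 ≤ a)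
    (hdrop : ∀ Q, a * F Q - b ≤ ∑ i, (F (Q.erase i) - F (insert i Q)))
    (h₁ : #B₁ = #B₀ + 1) (h₂ : #B₂ = #B₁ + 1) :
    a * permExpect F B₂ - b ≤ Fintype.card ι * (permExpect F B₀ - permExpect F B₂) :=
  calc a * permExpect F B₂ - b ≤ a * permExpect F B₁ - b := by
        gcongr
        exact permExpect_le_of_card_le hF (by omega)
    _ = 𝔼 σ : Equiv.Perm ι, (a * F (B₁.map σ.toEmbedding) - b) := by
        rw [expect_sub_distrib, ← mul_expect, Fintype.expect_const, permExpect]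
    _ ≤ ∑ i, (permExpect F (B₁.erase i) - permExpect F (insert i B₁)) := by
        rw [← expect_sum_erase_sub_insert]
        exact expect_le_expect fun σ _ => hdrop _
    _ ≤ ∑ _i : ι, (permExpect F B₀ - permExpect F B₂) := by
        gcongr with i
        · have := pred_card_le_card_erase (s := B₁) (a := i)
          exact permExpect_le_of_card_le hF (by omega)
        · have := card_insert_le i B₁
          exact permExpect_le_of_card_le hF (by omega)
    _ = Fintype.card ι * (permExpect F B₀ - permExpect F B₂) := by
        rw [sum_const, card_univ, nsmul_eq_mul]

theorem permExpect_decay {a b M : ℝ} (hF : Antitone F) (ha : 0 < a) (hb : 0 ≤ b)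
    (hdrop : ∀ Q, a * F Q - b ≤ ∑ i, (F (Q.erase i) - F (insert i Q))) (hM : F ∅ ≤ M) {r : ℕ}
    (hB : #B = 2 * r) :
    (1 + a / Fintype.card ι) ^ r * (permExpect F B - b / a) ≤ M := by
  induction r generalizing B with
  | zero =>
    obtain rfl : B = ∅ := by simpa using hB
    have hempty : permExpect F ∅ = F ∅ := by simp [permExpect]
    have : 0 ≤ b / a := by positivity
    rw [pow_zero, one_mul, hempty]
    linarith
  | succ r ih =>
    obtain ⟨B₁, -, hcard₁⟩ := exists_subset_card_eq (show 2 * r + 1 ≤ #B by omega)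
    obtain ⟨B₀, -, hcard₀⟩ := exists_subset_card_eq (show 2 * r ≤ #B₁ by omega)
    have hι : (0 : ℝ) < Fintype.card ι := by
      exact_mod_cast (show 0 < #B by omega).trans_le (card_le_univ B)
    have hstep := permExpect_contraction hF ha.le hdrop (B₀ := B₀) (B₁ := B₁) (B₂ := B)
      (by omega) (by omega)
    have hcontract : (1 + a / Fintype.card ι) * (permExpect F B - b / a) ≤
        permExpect F B₀ - b / a := by
      have hexpand : (1 + a / Fintype.card ι) * (permExpect F B - b / a) =
          permExpect F B - b / a + (a * permExpect F B - b) / Fintype.card ι := by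
        field_simp
      have := (div_le_iff₀' hι).2 hstep
      linarith
    calc (1 + a / Fintype.card ι) ^ (r + 1) * (permExpect F B - b / a)
        = (1 + a / Fintype.card ι) ^ r *
            ((1 + a / Fintype.card ι) * (permExpect F B - b / a)) := by ring
      _ ≤ (1 + a / Fintype.card ι) ^ r * (permExpect F B₀ - b / a) := by gcongr
      _ ≤ M := ih hcard₀

theorem exists_pairwise_disjoint_sum_le {κ : Type*} [Fintype κ] {F : κ → Finset ι → ℝ}
    {a b M : ℝ} (hF : ∀ j, Antitone (F j)) (ha : 0 < a) (hb : 0 ≤ b)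
    (hdrop : ∀ j Q, a * F j Q - b ≤ ∑ i, (F j (Q.erase i) - F j (insert i Q)))
    (hM : ∀ j, F j ∅ ≤ M) {r : ℕ} (hr : Fintype.card κ * (2 * r) ≤ Fintype.card ι) :
    ∃ Q : κ → Finset ι, Pairwise (Function.onFun Disjoint Q) ∧
      ∑ j, F j (Q j) ≤ Fintype.card κ * (b / a + M / (1 + a / Fintype.card ι) ^ r) := by
  obtain ⟨f⟩ : Nonempty (κ × Fin (2 * r) ↪ ι) :=
    Function.Embedding.nonempty_of_card_le (by simpa using hr)
  let B (j : κ) : Finset ι := univ.map ((Function.Embedding.sectR j _).trans f)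
  have hdisj : Pairwise (Function.onFun Disjoint B) := fun j j' hj => by
    simp only [B, Function.onFun, disjoint_left, mem_map]
    rintro _ ⟨s, -, rfl⟩ ⟨s', -, h⟩
    exact hj (congrArg Prod.fst (f.injective h)).symm
  have hB (j : κ) : permExpect (F j) (B j) ≤ b / a + M / (1 + a / Fintype.card ι) ^ r := by
    have hdecay := permExpect_decay (hF j) ha hb (hdrop j) (hM j) (B := B j) (r := r) (by simp [B])
    rw [← le_div_iff₀' (by positivity)] at hdecay
    linarith
  obtain ⟨σ, -, hσ⟩ : ∃ σ ∈ (univ : Finset (Equiv.Perm ι)),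
      ∑ j, F j ((B j).map σ.toEmbedding) ≤
        Fintype.card κ * (b / a + M / (1 + a / Fintype.card ι) ^ r) := by
    refine exists_le_of_expect_le univ_nonempty ?_
    rw [expect_sum_comm]
    exact (sum_le_card_nsmul _ _ _ fun j _ => hB j).trans_eq (nsmul_eq_mul _ _)
  exact ⟨fun j => (B j).map σ.toEmbedding, fun j j' hj => (disjoint_map _).2 (hdisj hj), hσ⟩

end PermExpect

section Hypergraph

theorem card_le_card_of_forall_not_disjoint {α : Type*} {E : Finset (Finset α)}
    {X : Finset α} (hE : (E : Set (Finset α)).PairwiseDisjoint id)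
    (hX : ∀ e ∈ E, ¬ Disjoint e X) :
    #E ≤ #X := by
  classical
  calc #E ≤ #(E.biUnion (· ∩ X)) := card_le_card_biUnion
        (fun _ he _ he' hne => (hE he he' hne).mono inter_subset_left inter_subset_left)
        (fun e he => not_disjoint_iff_nonempty_inter.1 (hX e he))
    _ ≤ #X := card_le_card (biUnion_subset.2 fun _ _ => inter_subset_right)

variable {ι α : Type*} [DecidableEq α]

/-- The edges of the hypergraph `E` contained in the vertex set `P`. -/
def edgesInside (E : Finset (Finset α)) (P : Finset α) : Finset (Finset α) :=
  {e ∈ E | e ⊆ P}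

/-- The edges of the hypergraph `E` inside `P` that meet both `X` and its complement. -/
def crossing (E : Finset (Finset α)) (P X : Finset α) : Finset (Finset α) :=
  {e ∈ E | e ⊆ P ∧ ¬ e ⊆ X ∧ ¬ Disjoint e X}

/-- The edge expansion of a family of hypergraphs `H i` on `P`: the total number of edges
crossing `X ⊆ P` is at least `(A * log (|P| / |X|) - c) * |X|`, where `c` is an admissible loss. -/
def IsLogExpander [Fintype ι] (H : ι → Finset (Finset α)) (P : Finset α) (A c : ℝ) : Prop :=
  ∀ X ⊆ P, X.Nonempty →
    (A * (Real.log #P - Real.log #X) - c) * #X ≤ ∑ i, (#(crossing (H i) P X) : ℝ)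

variable {E : Finset (Finset α)} {P X : Finset α}

theorem edgesInside_subset (E : Finset (Finset α)) (P : Finset α) : edgesInside E P ⊆ E :=
  filter_subset _ _

theorem crossing_subset (E : Finset (Finset α)) (P X : Finset α) : crossing E P X ⊆ E :=
  filter_subset _ _

theorem card_edgesInside_le (E : Finset (Finset α)) (P X : Finset α) :
    #(edgesInside E P) ≤
      #(edgesInside E X) + #(edgesInside E (P \ X)) + #(crossing E P X) := by
  have hsub : edgesInside E P ⊆
      edgesInside E X ∪ edgesInside E (P \ X) ∪ crossing E P X := by
    intro e he
    simp only [edgesInside, crossing, mem_union, mem_filter, subset_sdiff] at he ⊢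
    tauto
  exact (card_le_card hsub).trans
    ((card_union_le _ _).trans (Nat.add_le_add_right (card_union_le _ _) _))

theorem card_crossing_le (hE : (E : Set (Finset α)).PairwiseDisjoint id) (P X : Finset α) :
    #(crossing E P X) ≤ #X :=
  card_le_card_of_forall_not_disjoint (hE.subset (crossing_subset E P X))
    fun _ he => (mem_filter.1 he).2.2.2

theorem card_edgesInside_mul_le {r : ℕ} (hE : (E : Set (Finset α)).PairwiseDisjoint id)
    (hr : ∀ e ∈ E, #e = r) (P : Finset α) : #(edgesInside E P) * r ≤ #P :=
  calc #(edgesInside E P) * r = #((edgesInside E P).biUnion id) := by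
        rw [card_biUnion (hE.subset (edgesInside_subset E P))]
        exact (sum_const_nat fun e he => hr e (edgesInside_subset E P he)).symm
    _ ≤ #P := card_le_card (biUnion_subset.2 fun _ he => (mem_filter.1 he).2)

theorem exists_ne_of_forall_lt_sum [Fintype ι] [Nonempty ι] {f : ι → ℕ}
    (h : ∀ i, f i < ∑ j, f j) : ∃ i j, i ≠ j ∧ 0 < f i ∧ 0 < f j := by
  classical
  obtain ⟨i, -, hi⟩ := exists_ne_zero_of_sum_ne_zero (h (Classical.arbitrary ι)).ne_bot
  have hrest : ∑ j ∈ univ.erase i, f j ≠ 0 := by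
    have := h i
    have := add_sum_erase univ f (mem_univ i)
    omega
  obtain ⟨j, hj, hfj⟩ := exists_ne_zero_of_sum_ne_zero hrest
  exact ⟨i, j, (ne_of_mem_erase hj).symm, Nat.pos_of_ne_zero hi, Nat.pos_of_ne_zero hfj⟩

-- A minimal set with at least `|P| * (A * log |P| + B)` inner edges expands, since neither side of
-- a cut has that many.
theorem exists_isLogExpander [Fintype ι] [Fintype α] [Nonempty α] {H : ι → Finset (Finset α)}
    {A B : ℝ} (hA : 0 ≤ A)
    (hH : Fintype.card α * (A * Real.log (Fintype.card α) + B) ≤ ∑ i, (#(H i) : ℝ)) :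
    ∃ P : Finset α, P.Nonempty ∧ #P * B ≤ ∑ i, (#(edgesInside (H i) P) : ℝ) ∧
      IsLogExpander H P A 0 := by
  let edges (P : Finset α) : ℝ := ∑ i, (#(edgesInside (H i) P) : ℝ)
  obtain ⟨P, ⟨hP, hPE⟩, hmin⟩ := exists_minimal_of_wellFoundedLT
    (fun P : Finset α => P.Nonempty ∧ #P * (A * Real.log #P + B) ≤ edges P)
    ⟨univ, univ_nonempty, by simpa [edges, edgesInside] using hH⟩
  have hsmall {Y : Finset α} (hY : Y.Nonempty) (hYP : Y ⊂ P) :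
      edges Y < #Y * (A * Real.log #Y + B) := by
    by_contra! h
    exact hYP.2 (hmin ⟨hY, h⟩ hYP.1)
  refine ⟨P, hP, ?_, fun X hXP hX => ?_⟩
  · have : 0 ≤ #P * (A * Real.log #P) :=
      mul_nonneg (Nat.cast_nonneg _) (mul_nonneg hA (Real.log_natCast_nonneg _))
    linarith
  obtain rfl | hne := eq_or_ne X P
  · simpa using sum_nonneg fun i _ => Nat.cast_nonneg _
  have hY : (P \ X).Nonempty := sdiff_nonempty.2 fun h => hne (hXP.antisymm h)
  have hsplit : edges P ≤ edges X + edges (P \ X) + ∑ i, (#(crossing (H i) P X) : ℝ) := by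
    simp only [edges, ← sum_add_distrib]
    exact sum_le_sum fun i _ => mod_cast card_edgesInside_le (H i) P X
  have hXE := hsmall hX (hXP.ssubset_of_ne hne)
  have hYE := hsmall hY (sdiff_ssubset hXP hX)
  have hcard : (#P : ℝ) = #(P \ X) + #X := mod_cast (card_sdiff_add_card_eq_card hXP).symm
  have hlog : A * #(P \ X) * Real.log #(P \ X) ≤ A * #(P \ X) * Real.log #P := by
    have : (0 : ℝ) < #(P \ X) := mod_cast hY.card_pos
    gcongr
    exact sdiff_subset
  have hexpand : (#P : ℝ) * (A * Real.log #P + B) =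
      (#(P \ X) + #X) * (A * Real.log #P + B) := by rw [← hcard]
  rw [sub_zero]
  linarith

theorem IsLogExpander.restrict [Fintype ι] {H : ι → Finset (Finset α)} {A c : ℝ}
    (h : IsLogExpander H P A c) (hH : ∀ i, (H i : Set (Finset α)).PairwiseDisjoint id)
    (R : Finset ι) [DecidableEq ι] : IsLogExpander (fun i : R => H i) P A (c + #Rᶜ) := by
  intro X hXP hX
  have hlost : ∑ i ∈ Rᶜ, (#(crossing (H i) P X) : ℝ) ≤ #Rᶜ * #X := by
    rw [← nsmul_eq_mul]
    exact sum_le_card_nsmul _ _ _ fun i _ => mod_cast card_crossing_le (hH i) P X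
  have htotal := h X hXP hX
  rw [← sum_add_sum_compl R, ← sum_coe_sort R] at htotal
  linarith

end Hypergraph

theorem div_le_log_sub_log {x y N c : ℝ} (hx : 0 < x) (hN : 0 ≤ N) (hxy : x + N ≤ y)
    (hxc : x + N ≤ c) : N / c ≤ Real.log y - Real.log x :=
  calc N / c ≤ N / (x + N) := by gcongr
    _ = 1 - ((x + N) / x)⁻¹ := by field_simp; ring
    _ ≤ Real.log ((x + N) / x) := Real.one_sub_inv_le_log_of_pos (by positivity)
    _ = Real.log (x + N) - Real.log x := Real.log_div (by positivity) hx.ne'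
    _ ≤ Real.log y - Real.log x := by gcongr

section Decoder

variable {ι α V : Type*} [AddCommGroup V]

/-- Each `H i` is a matching of triples, every one of which sums under `v` to the vector `u i`. In
a linear 3-LCC, `u = v`; a separate index type for `u` allows only some of the vectors to be
decoded. -/
structure IsTripleDecoder (u : ι → V) (v : α → V) (H : ι → Finset (Finset α)) : Prop where
  card_eq_three : ∀ i, ∀ e ∈ H i, #e = 3
  pairwiseDisjoint : ∀ i, (H i : Set (Finset α)).PairwiseDisjoint id
  sum_eq : ∀ i, ∀ e ∈ H i, ∑ a ∈ e, v a = u i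

theorem IsTripleDecoder.comp {κ : Type*} {u : ι → V} {v : α → V} {H : ι → Finset (Finset α)}
    (h : IsTripleDecoder u v H) (f : κ → ι) : IsTripleDecoder (u ∘ f) v (H ∘ f) where
  card_eq_three j := h.card_eq_three (f j)
  pairwiseDisjoint j := h.pairwiseDisjoint (f j)
  sum_eq j := h.sum_eq (f j)

open Classical in
/-- The vertices `z ∈ P` joined to `x` by decoding steps with distinct labels in `Q`: adding to
`v x + v z` the vectors `u i` of the labels `i` used leaves a sum of at most one `v a` per label. -/
noncomputable def reach (u : ι → V) (v : α → V) (P : Finset α) (x : α) (Q : Finset ι) :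
    Finset α :=
  {z ∈ P | ∃ T ⊆ Q, v x + v z + ∑ i ∈ T, u i ∈ shortSums v #T}

/-- The logarithmic deficit of `reach`: zero when all of `P` is reached. -/
noncomputable def reachDeficit (u : ι → V) (v : α → V) (P : Finset α) (x : α) (Q : Finset ι) : ℝ :=
  Real.log #P - Real.log #(reach u v P x Q)

variable {u : ι → V} {v : α → V} {H : ι → Finset (Finset α)} {P : Finset α} {x y : α}
  {Q Q' : Finset ι}

theorem IsTripleDecoder.card_mul_three_le [Fintype α] (h : IsTripleDecoder u v H) (i : ι) :
    #(H i) * 3 ≤ Fintype.card α := by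
  classical
  simpa [edgesInside] using
    card_edgesInside_mul_le (h.pairwiseDisjoint i) (h.card_eq_three i) univ

theorem IsTripleDecoder.three_le_card [Fintype α] (h : IsTripleDecoder u v H) {i : ι}
    (hi : 0 < #(H i)) : 3 ≤ Fintype.card α := by
  have := h.card_mul_three_le i
  omega

theorem IsTripleDecoder.le_one_of_mul_card_le [Fintype α] [Nonempty α] {δ : ℝ}
    (h : IsTripleDecoder u v H) {i : ι} (hi : δ * Fintype.card α ≤ #(H i)) : δ ≤ 1 := by
  have hle : #(H i) ≤ Fintype.card α :=
    (Nat.le_mul_of_pos_right _ three_pos).trans (h.card_mul_three_le i)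
  have hpos : (0 : ℝ) < Fintype.card α := mod_cast Fintype.card_pos
  refine le_of_mul_le_mul_right ?_ hpos
  rw [one_mul]
  exact hi.trans (mod_cast hle)

theorem IsTripleDecoder.exists_ne_edgesInside_nonempty [Fintype ι] [DecidableEq α]
    (h : IsTripleDecoder u v H) (hP : P.Nonempty) (hE : #P ≤ ∑ i, #(edgesInside (H i) P)) :
    ∃ i j, i ≠ j ∧ (edgesInside (H i) P).Nonempty ∧ (edgesInside (H j) P).Nonempty := by
  have hPpos := hP.card_pos
  obtain ⟨i₀, -⟩ := nonempty_of_sum_ne_zero (hPpos.trans_le hE).ne'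
  have : Nonempty ι := ⟨i₀⟩
  simp only [← card_pos]
  refine exists_ne_of_forall_lt_sum fun i => ?_
  have := card_edgesInside_mul_le (h.pairwiseDisjoint i) (h.card_eq_three i) P
  omega

theorem reach_subset (u : ι → V) (v : α → V) (P : Finset α) (x : α) (Q : Finset ι) :
    reach u v P x Q ⊆ P := by
  classical exact filter_subset _ _

theorem reach_mono (u : ι → V) (v : α → V) (P : Finset α) (x : α) : Monotone (reach u v P x) := by
  classical
  exact fun Q Q' h => monotone_filter_right P fun z _ ⟨T, hT, hz⟩ => ⟨T, hT.trans h, hz⟩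

theorem reachDeficit_le (u : ι → V) (v : α → V) (P : Finset α) (x : α) (Q : Finset ι) :
    reachDeficit u v P x Q ≤ Real.log #P :=
  sub_le_self _ (Real.log_natCast_nonneg _)

variable [Module (ZMod 2) V]

theorem self_mem_reach (u : ι → V) (v : α → V) (hx : x ∈ P) (Q : Finset ι) :
    x ∈ reach u v P x Q := by
  classical
  exact mem_filter.2 ⟨hx, ∅, empty_subset Q, ∅, by simp [ZModModule.add_self]⟩

theorem card_reach_pos (u : ι → V) (v : α → V) (hx : x ∈ P) (Q : Finset ι) :
    (0 : ℝ) < #(reach u v P x Q) :=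
  mod_cast card_pos.2 ⟨x, self_mem_reach u v hx Q⟩

theorem reachDeficit_antitone (u : ι → V) (v : α → V) (hx : x ∈ P) :
    Antitone (reachDeficit u v P x) := fun Q Q' h => by
  have := card_reach_pos u v hx Q
  unfold reachDeficit
  gcongr
  exact reach_mono u v P x h

theorem reachDeficit_nonneg (u : ι → V) (v : α → V) (hx : x ∈ P) (Q : Finset ι) :
    0 ≤ reachDeficit u v P x Q := by
  have := card_reach_pos u v hx Q
  rw [reachDeficit, sub_nonneg]
  gcongr
  exact reach_subset u v P x Q

theorem IsTripleDecoder.add_add_mem_shortSums (h : IsTripleDecoder u v H) {i : ι} {e : Finset α}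
    (he : e ∈ H i) {z w : α} (hz : z ∈ e) (hw : w ∈ e) (hzw : z ≠ w) :
    v z + v w + u i ∈ shortSums v 1 := by
  classical
  have hsub : {z, w} ⊆ e := by simp [insert_subset_iff, hz, hw]
  refine ⟨e \ {z, w}, ?_, ?_⟩
  · rw [card_sdiff_of_subset hsub, h.card_eq_three i e he, card_pair hzw]
  · rw [← h.sum_eq i e he, ← sum_sdiff hsub, sum_pair hzw, add_left_comm, ZModModule.add_self,
      add_zero]

theorem IsTripleDecoder.mem_reach_insert [DecidableEq ι] (h : IsTripleDecoder u v H) {i : ι}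
    {e : Finset α} (he : e ∈ H i) {z w : α} (hz : z ∈ e) (hw : w ∈ e) (hwP : w ∈ P)
    (hzr : z ∈ reach u v P x (Q.erase i)) : w ∈ reach u v P x (insert i Q) := by
  classical
  obtain rfl | hzw := eq_or_ne z w
  · exact reach_mono u v P x ((erase_subset i Q).trans (subset_insert i Q)) hzr
  obtain ⟨-, T, hT, hzT⟩ := mem_filter.1 hzr
  have hiT : i ∉ T := fun hi => notMem_erase i Q (hT hi)
  refine mem_filter.2
    ⟨hwP, insert i T, insert_subset_insert i (hT.trans (erase_subset i Q)), ?_⟩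
  have hsum : v x + v w + ∑ j ∈ insert i T, u j =
      (v x + v z + ∑ j ∈ T, u j) + (v z + v w + u i) := by
    calc v x + v w + ∑ j ∈ insert i T, u j
        = v x + v w + (u i + ∑ j ∈ T, u j) + (v z + v z) := by
          rw [sum_insert hiT, ZModModule.add_self, add_zero]
      _ = (v x + v z + ∑ j ∈ T, u j) + (v z + v w + u i) := by abel
  rw [hsum, card_insert_of_notMem hiT]
  exact add_mem_shortSums hzT (h.add_add_mem_shortSums he hz hw hzw)

-- An edge crossing the set `X` reached by `Q` has a vertex reached by `insert i Q` but not by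
-- `Q.erase i`, so adding or removing `i` changes `|X|` by the number of crossing edges.
theorem IsTripleDecoder.card_crossing_add_card_reach_le [DecidableEq α] [DecidableEq ι]
    (h : IsTripleDecoder u v H) (P : Finset α) (x : α) (Q : Finset ι) (i : ι) :
    #(reach u v P x (Q.erase i)) + #(crossing (H i) P (reach u v P x Q)) ≤
      #(reach u v P x (insert i Q)) := by
  have hsub₁ : reach u v P x (Q.erase i) ⊆ reach u v P x Q := reach_mono u v P x (erase_subset i Q)
  have hsub₂ : reach u v P x Q ⊆ reach u v P x (insert i Q) :=
    reach_mono u v P x (subset_insert i Q)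
  rw [← card_sdiff_add_card_eq_card (hsub₁.trans hsub₂), add_comm]
  gcongr
  refine card_le_card_of_forall_not_disjoint
    ((h.pairwiseDisjoint i).subset (crossing_subset _ _ _)) fun e he => ?_
  obtain ⟨heH, heP, hout, hin⟩ := mem_filter.1 he
  obtain ⟨w, hw, hwX⟩ := not_subset.1 hout
  obtain ⟨z, hz, hzX⟩ := not_disjoint_iff.1 hin
  rw [not_disjoint_iff]
  by_cases hz' : z ∈ reach u v P x (Q.erase i)
  · exact ⟨w, hw, mem_sdiff.2
      ⟨h.mem_reach_insert heH hz hw (heP hw) hz', fun hw' => hwX (hsub₁ hw')⟩⟩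
  · exact ⟨z, hz, mem_sdiff.2 ⟨hsub₂ hzX, hz'⟩⟩

theorem IsTripleDecoder.reachDeficit_drop [Fintype ι] [DecidableEq ι] [DecidableEq α] {A c : ℝ}
    (h : IsTripleDecoder u v H) (hP : IsLogExpander H P A c) (hx : x ∈ P) (Q : Finset ι) :
    A / 2 * reachDeficit u v P x Q - c / 2 ≤
      ∑ i, (reachDeficit u v P x (Q.erase i) - reachDeficit u v P x (insert i Q)) := by
  set X := reach u v P x Q with hX
  have hXpos : (0 : ℝ) < #X := card_reach_pos u v hx Q
  have hdrop (i : ι) : (#(crossing (H i) P X) : ℝ) / (2 * #X) ≤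
      reachDeficit u v P x (Q.erase i) - reachDeficit u v P x (insert i Q) := by
    have hlarge : (#(reach u v P x (Q.erase i)) + #(crossing (H i) P X) : ℝ) ≤ 2 * #X := by
      rw [two_mul]
      gcongr
      · exact reach_mono u v P x (erase_subset i Q)
      · exact card_crossing_le (h.pairwiseDisjoint i) P X
    have hgrow : (#(reach u v P x (Q.erase i)) + #(crossing (H i) P X) : ℝ) ≤
        #(reach u v P x (insert i Q)) := mod_cast h.card_crossing_add_card_reach_le P x Q i
    have hgain := div_le_log_sub_log (card_reach_pos u v hx _) (Nat.cast_nonneg _) hgrow hlarge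
    unfold reachDeficit
    linarith
  calc A / 2 * reachDeficit u v P x Q - c / 2
      = (A * (Real.log #P - Real.log #X) - c) * #X / (2 * #X) := by
        rw [reachDeficit, ← hX]; field_simp
    _ ≤ (∑ i, (#(crossing (H i) P X) : ℝ)) / (2 * #X) := by
        gcongr
        exact hP X (reach_subset u v P x Q) ⟨x, self_mem_reach u v hx Q⟩
    _ = ∑ i, (#(crossing (H i) P X) : ℝ) / (2 * #X) := sum_div _ _ _
    _ ≤ _ := sum_le_sum fun i _ => hdrop i

end Decoder

section Meeting

variable {ι α κ V : Type*} [AddCommGroup V] [Module (ZMod 2) V] {u : ι → V} {v : α → V}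
  {H : ι → Finset (Finset α)} {P : Finset α} {x y : α} {Q Q' : Finset ι}

theorem exists_add_add_sum_mem_shortSums [DecidableEq ι] (hQ : Disjoint Q Q')
    (hx : #P < 2 * #(reach u v P x Q)) (hy : #P < 2 * #(reach u v P y Q')) :
    ∃ T ⊆ Q ∪ Q', v x + v y + ∑ i ∈ T, u i ∈ shortSums v #T := by
  classical
  obtain ⟨z, hz⟩ := inter_nonempty_of_card_lt_card_add_card (reach_subset u v P x Q)
    (reach_subset u v P y Q') (by omega)
  obtain ⟨hzx, hzy⟩ := mem_inter.1 hz
  obtain ⟨-, T, hT, hxT⟩ := mem_filter.1 hzx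
  obtain ⟨-, T', hT', hyT⟩ := mem_filter.1 hzy
  have hTT' : Disjoint T T' := hQ.mono hT hT'
  refine ⟨T ∪ T', union_subset_union hT hT', ?_⟩
  have hsum : v x + v y + ∑ i ∈ T ∪ T', u i =
      (v x + v z + ∑ i ∈ T, u i) + (v y + v z + ∑ i ∈ T', u i) :=
    calc v x + v y + ∑ i ∈ T ∪ T', u i
        = v x + v y + (∑ i ∈ T, u i + ∑ i ∈ T', u i) + (v z + v z) := by
          rw [sum_union hTT', ZModModule.add_self, add_zero]
      _ = (v x + v z + ∑ i ∈ T, u i) + (v y + v z + ∑ i ∈ T', u i) := by abel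
  rw [hsum, card_union_of_disjoint hTT']
  exact add_mem_shortSums hxT hyT

variable [Fintype ι] [DecidableEq α] [Fintype κ] {A c : ℝ} {r : ℕ}

theorem IsTripleDecoder.exists_pairwise_disjoint_card_lt (h : IsTripleDecoder u v H)
    (hP : IsLogExpander H P A c) (hA : 0 < A) (hc : 0 ≤ c) {x : κ → α} (hx : ∀ j, x j ∈ P)
    (hr : Fintype.card κ * (2 * r) ≤ Fintype.card ι)
    (hsmall : Fintype.card κ *
      (c / A + Real.log #P / (1 + A / 2 / Fintype.card ι) ^ r) < Real.log 2) :
    ∃ Q : κ → Finset ι, Pairwise (Function.onFun Disjoint Q) ∧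
      ∀ j, #P < 2 * #(reach u v P (x j) (Q j)) := by
  classical
  obtain ⟨Q, hQ, hsum⟩ := exists_pairwise_disjoint_sum_le
    (F := fun j => reachDeficit u v P (x j)) (fun j => reachDeficit_antitone u v (hx j))
    (half_pos hA) (by positivity) (fun j => h.reachDeficit_drop hP (hx j))
    (fun j => reachDeficit_le u v P (x j) ∅) hr
  rw [div_div_div_cancel_right₀ two_ne_zero] at hsum
  refine ⟨Q, hQ, fun j => ?_⟩
  have hdeficit : reachDeficit u v P (x j) (Q j) < Real.log 2 :=
    (single_le_sum (fun j _ => reachDeficit_nonneg u v (hx j) (Q j)) (mem_univ j)).trans_lt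
      (hsum.trans_lt hsmall)
  have hP₀ : 0 < #P := card_pos.2 ⟨x j, hx j⟩
  have hpos := card_reach_pos u v (hx j) (Q j)
  rw [reachDeficit, sub_lt_iff_lt_add, ← Real.log_mul two_ne_zero hpos.ne'] at hdeficit
  exact_mod_cast (Real.log_lt_log_iff (mod_cast hP₀) (by positivity)).1 hdeficit

theorem IsTripleDecoder.exists_sum_add_sum_mem_shortSums (h : IsTripleDecoder u v H)
    (hP : IsLogExpander H P A c) (hA : 0 < A) (hc : 0 ≤ c) {x y : κ → α} (hx : ∀ j, x j ∈ P)
    (hy : ∀ j, y j ∈ P) (hr : Fintype.card κ * (4 * r) ≤ Fintype.card ι)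
    (hsmall : 2 * Fintype.card κ *
      (c / A + Real.log #P / (1 + A / 2 / Fintype.card ι) ^ r) < Real.log 2) :
    ∃ T : Finset ι, ∑ j, v (x j) + ∑ j, v (y j) + ∑ i ∈ T, u i ∈ shortSums v #T := by
  classical
  have hκ : Fintype.card (κ ⊕ κ) = 2 * Fintype.card κ := by rw [Fintype.card_sum, two_mul]
  obtain ⟨Q, hQ, hreach⟩ := h.exists_pairwise_disjoint_card_lt hP hA hc (x := Sum.elim x y)
    (Sum.forall.2 ⟨hx, hy⟩) (r := r) (by rw [hκ]; linarith) (by rw [hκ]; exact_mod_cast hsmall)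
  choose T hTQ hT using fun j : κ => exists_add_add_sum_mem_shortSums
    (hQ (Sum.inl_ne_inr (a := j) (b := j))) (hreach (Sum.inl j)) (hreach (Sum.inr j))
  have hdisj : ((univ : Finset κ) : Set κ).PairwiseDisjoint T := fun j _ j' _ hj => by
    refine Disjoint.mono (hTQ j) (hTQ j') ?_
    simp only [disjoint_union_left, disjoint_union_right]
    exact ⟨⟨hQ (by simpa), hQ (by simp)⟩, hQ (by simp), hQ (by simpa)⟩
  refine ⟨univ.biUnion T, ?_⟩
  rw [sum_biUnion hdisj, card_biUnion hdisj, ← sum_add_distrib, ← sum_add_distrib]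
  exact sum_mem_shortSums fun j _ => hT j

theorem IsTripleDecoder.exists_sum_edges_add_sum_mem_shortSums (h : IsTripleDecoder u v H)
    (hP : IsLogExpander H P A c) (hA : 0 < A) (hc : 0 ≤ c) {e₁ e₂ : Finset α} (he₁ : e₁ ⊆ P)
    (he₂ : e₂ ⊆ P) (hcard : #e₁ = #e₂) (hr : #e₁ * (4 * r) ≤ Fintype.card ι)
    (hsmall : 2 * #e₁ * (c / A + Real.log #P / (1 + A / 2 / Fintype.card ι) ^ r) < Real.log 2) :
    ∃ T : Finset ι, ∑ a ∈ e₁, v a + ∑ a ∈ e₂, v a + ∑ i ∈ T, u i ∈ shortSums v #T := by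
  let g : e₁ ≃ e₂ := equivOfCardEq hcard
  rw [← Fintype.card_coe e₁] at hr hsmall
  obtain ⟨T, hT⟩ := h.exists_sum_add_sum_mem_shortSums hP hA hc (x := fun j : e₁ => (j : α))
    (y := fun j => (g j : α)) (fun j => he₁ j.2) (fun j => he₂ (g j).2) hr hsmall
  rw [g.sum_comp fun j : e₂ => v j, sum_coe_sort e₁, sum_coe_sort e₂] at hT
  exact ⟨T, hT⟩

theorem IsTripleDecoder.exists_lt_sum_mem_shortSums_of_isLogExpander (h : IsTripleDecoder u v H)
    (hu : ∀ i, u i ∈ shortSums v 1) (hP : IsLogExpander H P A 0) (hA : 0 < A) {i₁ i₂ : ι}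
    (hi : i₁ ≠ i₂) {e₁ e₂ : Finset α} (he₁ : e₁ ∈ edgesInside (H i₁) P)
    (he₂ : e₂ ∈ edgesInside (H i₂) P) (hr : 12 * r + 2 ≤ Fintype.card ι)
    (hsmall : 6 * (2 / A + Real.log #P / (1 + A / 2 / Fintype.card ι) ^ r) < Real.log 2) :
    ∃ m < Fintype.card ι, ∑ i, u i ∈ shortSums v m := by
  classical
  obtain ⟨he₁, he₁P⟩ := mem_filter.1 he₁
  obtain ⟨he₂, he₂P⟩ := mem_filter.1 he₂
  have hcard₁ := h.card_eq_three i₁ e₁ he₁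
  have hcard : #e₁ = #e₂ := hcard₁.trans (h.card_eq_three i₂ e₂ he₂).symm
  let R : Finset ι := {i₁, i₂}ᶜ
  have hRc : #Rᶜ = 2 := by rw [compl_compl, card_pair hi]
  have hRcard : #R + 2 = Fintype.card ι := by rw [← hRc, card_add_card_compl]
  have hpow : (1 + A / 2 / Fintype.card ι) ^ r ≤ (1 + A / 2 / #R) ^ r := by
    obtain rfl | hr₀ := r.eq_zero_or_pos
    · simp
    have : 0 < #R := by omega
    gcongr
    omega
  have hPR := hP.restrict h.pairwiseDisjoint R
  rw [hRc, zero_add, Nat.cast_ofNat] at hPR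
  obtain ⟨T, hT⟩ := (h.comp (Subtype.val : R → ι)).exists_sum_edges_add_sum_mem_shortSums hPR
    hA zero_le_two he₁P he₂P hcard (r := r) (by rw [hcard₁, Fintype.card_coe]; omega) (by
      rw [hcard₁, Fintype.card_coe]
      refine lt_of_le_of_lt ?_ hsmall
      norm_num only
      gcongr)
  rw [h.sum_eq i₁ e₁ he₁, h.sum_eq i₂ e₂ he₂] at hT
  have hrest : ∑ i ∈ Tᶜ, u i ∈ shortSums v #Tᶜ := by
    simpa using sum_mem_shortSums fun i (_ : i ∈ Tᶜ) => hu i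
  refine ⟨#R, by omega, ?_⟩
  have hsum : ∑ i, u i = (u i₁ + u i₂ + ∑ i ∈ T, u i) + ∑ i ∈ Tᶜ, u i := by
    rw [← sum_compl_add_sum {i₁, i₂}, sum_pair hi, ← sum_coe_sort, ← sum_add_sum_compl T]
    abel
  rw [hsum, ← Fintype.card_coe R, ← card_add_card_compl T]
  exact add_mem_shortSums hT hrest

end Meeting

theorem natCast_le_mul_logb_of_pow_le_pow {b x : ℝ} {m n : ℕ} (hb : 1 < b) (h : b ^ m ≤ x ^ n) :
    m ≤ n * Real.logb b x :=
  calc (m : ℝ) = Real.logb b (b ^ m) := by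
        rw [Real.logb_pow, Real.logb_self_eq_one hb, mul_one]
    _ ≤ Real.logb b (x ^ n) := Real.logb_le_logb_of_le hb (by positivity) h
    _ = n * Real.logb b x := Real.logb_pow b x n

theorem le_one_add_pow_of_log_le {ε y : ℝ} {r : ℕ} (hε₀ : 0 ≤ ε) (hε₂ : ε ≤ 2) (hy : 0 < y)
    (h : Real.log y ≤ r * (ε / 2)) : y ≤ (1 + ε) ^ r := by
  have hlog : ε / 2 ≤ Real.log (1 + ε) :=
    calc ε / 2 = 2 * ε / 4 := by ring
      _ ≤ 2 * ε / (ε + 2) := by gcongr; linarith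
      _ ≤ Real.log (1 + ε) := Real.le_log_one_add_of_nonneg hε₀
  rw [← Real.log_le_log_iff hy (by positivity), Real.log_pow]
  exact h.trans (by gcongr)

theorem one_le_log_of_three_le {x : ℝ} (hx : 3 ≤ x) : 1 ≤ Real.log x := by
  rw [Real.le_log_iff_exp_le (by linarith)]
  linarith [Real.exp_one_lt_three]

theorem log_le_logb_two {x : ℝ} (hx : 1 ≤ x) : Real.log x ≤ Real.logb 2 x :=
  le_div_self (Real.log_nonneg hx) (Real.log_pos one_lt_two) (by linarith [Real.log_two_lt_d9])

theorem three_halves_le_logb_two {x : ℝ} (hx : 3 ≤ x) : 3 / 2 ≤ Real.logb 2 x := by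
  have := natCast_le_mul_logb_of_pow_le_pow (b := 2) (x := x) (m := 3) (n := 2) one_lt_two
    (by nlinarith)
  push_cast at this
  linarith

theorem one_half_le_logb_two_logb_two {x : ℝ} (hx : 3 ≤ x) :
    1 / 2 ≤ Real.logb 2 (Real.logb 2 x) := by
  have hlogb := three_halves_le_logb_two hx
  have := natCast_le_mul_logb_of_pow_le_pow (b := 2) (x := Real.logb 2 x) (m := 1) (n := 2)
    one_lt_two (by nlinarith)
  push_cast at this
  linarith

theorem log_twenty_mul_log_le {x : ℝ} (hx : 3 ≤ x) :
    Real.log (20 * Real.log x) ≤ 9 * Real.logb 2 (Real.logb 2 x) := by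
  have hlog := one_le_log_of_three_le hx
  have hlogb := three_halves_le_logb_two hx
  have hhalf := one_half_le_logb_two_logb_two hx
  have htwenty : Real.log 20 ≤ 4 := by
    rw [Real.log_le_iff_le_exp (by norm_num), show (4 : ℝ) = (4 : ℕ) * 1 by norm_num,
      Real.exp_nat_mul]
    calc (20 : ℝ) ≤ 2.7 ^ 4 := by norm_num
      _ ≤ Real.exp 1 ^ 4 := by gcongr; linarith [Real.exp_one_gt_d9]
  calc Real.log (20 * Real.log x) = Real.log 20 + Real.log (Real.log x) :=
        Real.log_mul (by norm_num) (by positivity)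
    _ ≤ 4 + Real.logb 2 (Real.logb 2 x) := by
        gcongr
        exact (Real.log_le_log (by positivity) (log_le_logb_two (by linarith))).trans
          (log_le_logb_two (by linarith))
    _ ≤ 9 * Real.logb 2 (Real.logb 2 x) := by linarith

section Reduction

variable {ι α V : Type*} [Fintype ι] [Fintype α] [AddCommGroup V] [Module (ZMod 2) V] {u : ι → V}
  {v : α → V} {H : ι → Finset (Finset α)} {δ : ℝ} {r : ℕ}

theorem IsTripleDecoder.exists_lt_sum_mem_shortSums (h : IsTripleDecoder u v H)
    (hu : ∀ i, u i ∈ shortSums v 1) (hδ : 0 < δ) (hH : ∀ i, δ * Fintype.card α ≤ #(H i))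
    (hα : 1 ≤ Real.log (Fintype.card α))
    (hι : 96 * Real.log (Fintype.card α) ≤ δ * Fintype.card ι)
    (hr : 12 * r + 2 ≤ Fintype.card ι)
    (hpow : 20 * Real.log (Fintype.card α) ≤ (1 + δ / (4 * Real.log (Fintype.card α))) ^ r) :
    ∃ m < Fintype.card ι, ∑ i, u i ∈ shortSums v m := by
  classical
  set l := Real.log (Fintype.card α) with hl
  have hα₀ : Nonempty α := by
    by_contra! hempty
    norm_num [hl] at hα
  have hι₀ : (0 : ℝ) < Fintype.card ι := Nat.cast_pos.2 (by omega)
  have hedges : Fintype.card α * (δ * Fintype.card ι / (2 * l) * l + δ * Fintype.card ι / 2) ≤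
      ∑ i, (#(H i) : ℝ) :=
    calc Fintype.card α * (δ * Fintype.card ι / (2 * l) * l + δ * Fintype.card ι / 2)
        = Fintype.card ι • (δ * Fintype.card α) := by rw [nsmul_eq_mul]; field_simp; ring
      _ ≤ ∑ i, (#(H i) : ℝ) := card_nsmul_le_sum _ _ _ fun i _ => hH i
  obtain ⟨P, hP₀, hPE, hP⟩ := exists_isLogExpander (by positivity) hedges
  have hPE' : #P ≤ ∑ i, #(edgesInside (H i) P) := by
    have : (#P : ℝ) * 1 ≤ #P * (δ * Fintype.card ι / 2) := by gcongr; linarith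
    exact_mod_cast (mul_one (#P : ℝ)).symm.trans_le (this.trans hPE)
  obtain ⟨i₁, i₂, hi, ⟨e₁, he₁⟩, ⟨e₂, he₂⟩⟩ := h.exists_ne_edgesInside_nonempty hP₀ hPE'
  refine h.exists_lt_sum_mem_shortSums_of_isLogExpander hu hP (by positivity) hi he₁ he₂ hr ?_
  have hbias : 2 / (δ * Fintype.card ι / (2 * l)) ≤ 1 / 24 := by
    rw [div_div_eq_mul_div, div_le_div_iff₀ (by positivity) (by norm_num)]
    linarith
  have hdecay : Real.log #P / (1 + δ * Fintype.card ι / (2 * l) / 2 / Fintype.card ι) ^ r ≤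
      1 / 20 := by
    have hlogP : Real.log #P ≤ l := by
      have := hP₀.card_pos
      rw [hl]
      gcongr
      exact card_le_univ P
    have hε : δ * Fintype.card ι / (2 * l) / 2 / Fintype.card ι = δ / (4 * l) := by
      field_simp; norm_num
    rw [hε, div_le_div_iff₀ (by positivity) (by norm_num)]
    linarith
  have := Real.log_two_gt_d9
  linarith

theorem IsTripleDecoder.two_pow_finrank_le {H : α → Finset (Finset α)}
    (h : IsTripleDecoder v v H) (hδ₀ : 0 < δ) (hδ₁ : δ ≤ 1)
    (hH : ∀ i, δ * Fintype.card α ≤ #(H i)) (hα : 3 ≤ Fintype.card α)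
    (hr : 8 * (Real.log (Fintype.card α) * Real.log (20 * Real.log (Fintype.card α))) ≤ δ * r) :
    2 ^ finrank (ZMod 2) (Submodule.span (ZMod 2) (Set.range v)) ≤
      (Fintype.card α + 1) ^ (12 * r + 1) := by
  set l := Real.log (Fintype.card α)
  have hl : 1 ≤ l := one_le_log_of_three_le (mod_cast hα)
  have hl₂₀ : 1 ≤ Real.log (20 * l) := one_le_log_of_three_le (by linarith)
  refine two_pow_finrank_span_le fun S hS => ?_
  have hlarge : 96 * l ≤ δ * #S :=
    calc 96 * l ≤ 12 * (8 * (l * Real.log (20 * l))) := by nlinarith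
      _ ≤ 12 * (δ * r) := by gcongr
      _ = δ * (12 * r) := by ring
      _ ≤ δ * #S := by gcongr; exact_mod_cast (Nat.le_succ _).trans hS.le
  have hpow : 20 * l ≤ (1 + δ / (4 * l)) ^ r := by
    refine le_one_add_pow_of_log_le (by positivity) ?_ (by positivity) ?_
    · rw [div_le_iff₀ (by positivity)]
      linarith
    · rw [div_div, mul_div_assoc', le_div_iff₀ (by positivity)]
      linarith
  have hself (a : α) : v a ∈ shortSums v 1 := ⟨{a}, by simp⟩
  rw [← sum_coe_sort, ← Fintype.card_coe]
  exact (h.comp (Subtype.val : S → α)).exists_lt_sum_mem_shortSums (fun a => hself a) hδ₀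
    (fun a => hH a) hl (by rwa [Fintype.card_coe]) (by rw [Fintype.card_coe]; omega) hpow

theorem IsTripleDecoder.finrank_span_le {H : α → Finset (Finset α)}
    (h : IsTripleDecoder v v H) (hδ₀ : 0 < δ) (hδ₁ : δ ≤ 1)
    (hH : ∀ i, δ * Fintype.card α ≤ #(H i)) (hα : 3 ≤ Fintype.card α) :
    (finrank (ZMod 2) (Submodule.span (ZMod 2) (Set.range v)) : ℝ) ≤
      218 * (δ⁻¹ * (Real.log (Fintype.card α) * Real.log (20 * Real.log (Fintype.card α)))) *
        Real.logb 2 (Fintype.card α) := by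
  have hα' : (3 : ℝ) ≤ Fintype.card α := mod_cast hα
  set l := Real.log (Fintype.card α)
  set W := δ⁻¹ * (l * Real.log (20 * l))
  have hl : 1 ≤ l := one_le_log_of_three_le hα'
  have hW₁ : 1 ≤ W :=
    one_le_mul_of_one_le_of_one_le ((one_le_inv₀ hδ₀).2 hδ₁)
      (one_le_mul_of_one_le_of_one_le hl (one_le_log_of_three_le (by linarith)))
  have hceil : 8 * (l * Real.log (20 * l)) ≤ δ * ⌈8 * W⌉₊ := by
    rw [← inv_mul_le_iff₀ hδ₀, mul_left_comm]
    exact Nat.le_ceil _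
  have hpow : (2 : ℝ) ^ finrank (ZMod 2) (Submodule.span (ZMod 2) (Set.range v)) ≤
      (Fintype.card α : ℝ) ^ (2 * (12 * ⌈8 * W⌉₊ + 1)) :=
    calc (2 : ℝ) ^ finrank (ZMod 2) (Submodule.span (ZMod 2) (Set.range v))
        ≤ ((Fintype.card α : ℝ) + 1) ^ (12 * ⌈8 * W⌉₊ + 1) :=
          mod_cast h.two_pow_finrank_le hδ₀ hδ₁ hH hα hceil
      _ ≤ ((Fintype.card α : ℝ) ^ 2) ^ (12 * ⌈8 * W⌉₊ + 1) := by gcongr; nlinarith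
      _ = _ := (pow_mul _ _ _).symm
  have hexponent : 2 * (12 * (⌈8 * W⌉₊ : ℝ) + 1) ≤ 218 * W := by
    linarith [Nat.ceil_lt_add_one (show 0 ≤ 8 * W by linarith)]
  have hlogb : 0 ≤ Real.logb 2 (Fintype.card α) := by linarith [three_halves_le_logb_two hα']
  have hdim := natCast_le_mul_logb_of_pow_le_pow one_lt_two hpow
  push_cast at hdim
  exact hdim.trans (mul_le_mul_of_nonneg_right hexponent hlogb)

end Reduction

theorem stmt0_general {α V : Type*} [Fintype α] [Nonempty α] [AddCommGroup V] [Module (ZMod 2) V]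
    {v : α → V} {H : α → Finset (Finset α)} {δ : ℝ} (hδ : 0 < δ) (h : IsTripleDecoder v v H)
    (hH : ∀ i, δ * Fintype.card α ≤ #(H i)) :
    (finrank (ZMod 2) (Submodule.span (ZMod 2) (Set.range v)) : ℝ) ≤
      2000 * δ⁻¹ * Real.logb 2 (Fintype.card α) ^ 2 *
        Real.logb 2 (Real.logb 2 (Fintype.card α)) := by
  have hδ₁ : δ ≤ 1 := h.le_one_of_mul_card_le (hH (Classical.arbitrary α))
  have hα : 3 ≤ Fintype.card α := by
    have hpos : (0 : ℝ) < δ * Fintype.card α := mul_pos hδ (mod_cast Fintype.card_pos)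
    exact h.three_le_card (mod_cast hpos.trans_le (hH (Classical.arbitrary α)))
  have hα' : (3 : ℝ) ≤ Fintype.card α := mod_cast hα
  have hl := one_le_log_of_three_le hα'
  set Λ := Real.logb 2 (Fintype.card α)
  have hΛ : 3 / 2 ≤ Λ := three_halves_le_logb_two hα'
  have hlogΛ : 1 / 2 ≤ Real.logb 2 Λ := one_half_le_logb_two_logb_two hα'
  calc (finrank (ZMod 2) (Submodule.span (ZMod 2) (Set.range v)) : ℝ)
      ≤ 218 * (δ⁻¹ * (Real.log (Fintype.card α) *
          Real.log (20 * Real.log (Fintype.card α)))) * Λ := h.finrank_span_le hδ hδ₁ hH hα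
    _ ≤ 218 * (δ⁻¹ * (Λ * (9 * Real.logb 2 Λ))) * Λ := by
        gcongr
        · exact Real.log_nonneg (by linarith)
        · exact log_le_logb_two (by linarith)
        · exact log_twenty_mul_log_le hα'
    _ = 1962 * (δ⁻¹ * Λ ^ 2 * Real.logb 2 Λ) := by ring
    _ ≤ 2000 * (δ⁻¹ * Λ ^ 2 * Real.logb 2 Λ) := by gcongr; norm_num
    _ = 2000 * δ⁻¹ * Λ ^ 2 * Real.logb 2 Λ := by ring

theorem IsBinaryLCC.isTripleDecoder {δ : ℝ} {n k : ℕ} {v : Fin n → Fin k → ZMod 2}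
    {H : Fin n → Finset (Finset (Fin n))} (h : IsBinaryLCC 3 δ v H) : IsTripleDecoder v v H where
  card_eq_three := h.2.1
  pairwiseDisjoint i e he e' he' hne := h.2.2.1 i e he e' he' hne
  sum_eq i e he := (h.2.2.2.2 i e he).symm

theorem IsBinaryLCC.dimension_le {δ : ℝ} {n k : ℕ} [NeZero n] {v : Fin n → Fin k → ZMod 2}
    {H : Fin n → Finset (Finset (Fin n))} (h : IsBinaryLCC 3 δ v H) (hδ : 0 < δ) :
    (k : ℝ) ≤ 2000 * δ⁻¹ * Real.logb 2 n ^ 2 * Real.logb 2 (Real.logb 2 n) := by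
  have hdim := stmt0_general hδ h.isTripleDecoder (by simpa using h.2.2.2.1)
  rwa [h.1, finrank_top, finrank_fin_fun, Fintype.card_fin] at hdim

/-- There is an absolute constant `C > 0` such that any binary linear `(3,δ)`-LCC
of block length `n ≥ 3` and dimension `k ≥ 1` satisfies
`k ≤ C · δ⁻² · (log₂ n)² · log₂ log₂ n`. -/
theorem stmt0 :
    ∃ C : ℝ, 0 < C ∧
      ∀ (n k : ℕ) (δ : ℝ), 3 ≤ n → 1 ≤ k → 0 < δ → δ < 1 →
        (∃ (v : Fin n → Fin k → ZMod 2) (H : Fin n → Finset (Finset (Fin n))),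
          IsBinaryLCC 3 δ v H) →
        (k : ℝ) ≤ C * δ⁻¹ ^ 2 * (Real.logb 2 n) ^ 2 * Real.logb 2 (Real.logb 2 n) := by
  refine ⟨2000, by norm_num, ?_⟩
  rintro n k δ hn - hδ₀ hδ₁ ⟨v, H, h⟩
  have : NeZero n := ⟨by omega⟩
  have hloglog : 0 ≤ Real.logb 2 (Real.logb 2 n) :=
    one_half_pos.le.trans (one_half_le_logb_two_logb_two (mod_cast hn))
  have hδ : δ⁻¹ ≤ δ⁻¹ ^ 2 := le_self_pow₀ ((one_le_inv₀ hδ₀).2 hδ₁.le) two_ne_zero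
  exact (h.dimension_le hδ₀).trans (by gcongr)
end

section
/- There exists an absolute constant C > 0 such that the following holds for all integers n ≥ 3, k ≥ 1 and all δ ∈ (0,1): if M ∈ F_2^{n×k} with rows v_1,…,v_n is (together with matchings H_1,…,H_n) a binary linear (3,δ)-LCC of block length n and dimension k, then for every x ∈ F_2^k there exists a subset I ⊆ [n] with |I| ≤ C · δ^{-2} · log₂ n · log₂ log₂ n such that x = Σ_{i∈I} v_i. (Equivalently, the covering radius of the dual code is at most C · δ^{-2} · log₂ n · log₂ log₂ n.) -/
/-!
Write `x = ∑ i ∈ I, v i` with `#I` minimal, and give the edges of `H i`, for `i ∈ I`, the colour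
`i`. A vertex set `V` of maximal edge density `e(V) / (|V| log₂ |V|)` induces a hypergraph in which
every `U ⊆ V` has at least `φ |U| log₂ (|V| / |U|)` edges crossing its boundary. The set `R` of
vertices reachable from `a ∈ V` by rainbow walks with colours in a random set `S` therefore grows
quickly: the mean of `log₂ (|V| / |R|)` halves each time `O(δ⁻¹ log n)` colours are added, so that
`O(δ⁻¹ log n log log n)` colours suffice to reach more than half of `V` with high probability.

If `I` were much larger than that, one could pick two edges of distinct colours inside `V` and six
disjoint colour sets, one for each of their vertices, and thus join the vertices of one edge to
those of the other by rainbow walks with pairwise disjoint colours. Adding up the relations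
`v i = v a + v b + v c` over the set `Q` of all colours used, everything cancels except one row for
each colour of a walk; the two colours of the initial edges leave nothing behind. Hence
`∑ i ∈ Q, v i` is a sum of fewer than `#Q` rows, contradicting the minimality of `I`.
-/

namespace LCC

open Finset Function
open scoped BigOperators Pointwise

section PermAvg

variable {ι : Type*} [Fintype ι] [DecidableEq ι] {f : Finset ι → ℝ}

/-- The average of a set function `f` over all images of `B` under permutations of the ground set,
that is, the mean of `f` at a uniformly random set of size `#B`. Averaging over permutations rather
than over sets of a given size lets one permutation randomise several disjoint blocks at once. -/
noncomputable def permAvg (f : Finset ι → ℝ) (B : Finset ι) : ℝ :=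
  𝔼 σ : Equiv.Perm ι, f (σ • B)

lemma permAvg_empty (f : Finset ι → ℝ) : permAvg f ∅ = f ∅ := by
  simp [permAvg]

lemma permAvg_nonneg (hf : ∀ S, 0 ≤ f S) (B : Finset ι) : 0 ≤ permAvg f B :=
  expect_nonneg fun _ _ ↦ hf _

lemma permAvg_antitone (hf : Antitone f) : Antitone (permAvg f) := fun _ _ h ↦
  expect_le_expect fun _ _ ↦ hf (smul_finset_subset_smul_finset h)

lemma permAvg_smul (f : Finset ι → ℝ) (π : Equiv.Perm ι) (B : Finset ι) :
    permAvg f (π • B) = permAvg f B :=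
  Fintype.expect_equiv (Equiv.mulRight π) _ _ fun σ ↦ by
    rw [Equiv.coe_mulRight, mul_smul]

lemma permAvg_factorsThrough_card (f : Finset ι → ℝ) :
    (permAvg f).FactorsThrough (card : Finset ι → ℕ) := by
  intro B B' hBB'
  obtain ⟨π, hπ⟩ := Set.powersetCard.isPretransitive.exists_smul_eq (M := Equiv.Perm ι)
    (⟨B, hBB'⟩ : Set.powersetCard ι #B') ⟨B', rfl⟩
  have hπB : π • B = B' := congrArg Subtype.val hπ
  rw [← hπB, permAvg_smul]

lemma mul_permAvg_le_sum {φ : ℝ}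
    (hf : ∀ S, φ * f S ≤ ∑ i, (f (S.erase i) - f (insert i S))) (B : Finset ι) :
    φ * permAvg f B ≤ ∑ i, (permAvg f (B.erase i) - permAvg f (insert i B)) := by
  simp only [permAvg, ← expect_sub_distrib, mul_expect, ← expect_sum_comm]
  refine expect_le_expect fun σ _ ↦ (hf (σ • B)).trans_eq ?_
  refine (Equiv.sum_comp σ _).symm.trans (sum_congr rfl fun i _ ↦ ?_)
  have smul_erase : σ • B.erase i = (σ • B).erase (σ • i) :=
    image_erase (MulAction.injective σ) B i
  rw [← Equiv.Perm.smul_def, smul_finset_insert, smul_erase]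

lemma card_mul_permAvg_mem (i : ι) (B : Finset ι) :
    Fintype.card ι * permAvg (fun S ↦ if i ∈ S then 1 else 0) B = #B := by
  have symm (j : ι) : permAvg (fun S ↦ if j ∈ S then 1 else 0) B =
      permAvg (fun S ↦ if i ∈ S then 1 else 0) B :=
    Fintype.expect_equiv (Equiv.mulLeft (Equiv.swap i j)) _ _ fun σ ↦ by
      have mem_iff : i ∈ Equiv.swap i j • σ • B ↔ j ∈ σ • B := by
        have := smul_mem_smul_finset_iff (Equiv.swap i j) (b := j) (s := σ • B)
        rwa [Equiv.Perm.smul_def, Equiv.swap_apply_right] at this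
      simp only [Equiv.coe_mulLeft, mul_smul, mem_iff]
  calc Fintype.card ι * permAvg (fun S ↦ if i ∈ S then 1 else 0) B
      = ∑ j, permAvg (fun S ↦ if j ∈ S then 1 else 0) B := by simp [symm]
    _ = 𝔼 σ : Equiv.Perm ι, ∑ j, (if j ∈ σ • B then (1 : ℝ) else 0) :=
        (expect_sum_comm _ _ _).symm
    _ = #B := by simp

lemma two_pow_mul_le_of_antitone {y : ℕ → ℝ} {t φ : ℝ} (hy : Antitone y) (hy0 : ∀ j, 0 ≤ y j)
    (ht : 0 < t) (hφ : ∀ j, φ * y (j + 1) ≤ t * (y j - y (j + 2))) {s : ℕ} (hs : 4 * t ≤ φ * s)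
    (m : ℕ) : 2 ^ m * y (m * s) ≤ y 0 := by
  have hφ0 : 0 ≤ φ :=
    (pos_of_mul_pos_left ((mul_pos four_pos ht).trans_le hs) s.cast_nonneg).le
  have telescope (A : ℕ) : φ * s * y (A + s) ≤ t * (2 * y A) := calc
    φ * s * y (A + s) = ∑ _r ∈ range s, φ * y (A + s) := by simp; ring
    _ ≤ ∑ r ∈ range s, φ * y (A + r + 1) := by
        refine sum_le_sum fun r hr ↦ mul_le_mul_of_nonneg_left (hy ?_) hφ0
        have := mem_range.1 hr
        omega
    _ ≤ ∑ r ∈ range s, t * (y (A + r) + y (A + r + 1) - (y (A + (r + 1)) + y (A + (r + 1) + 1))) :=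
        sum_le_sum fun _ _ ↦ (hφ _).trans_eq <| by ring_nf
    _ = t * (y A + y (A + 1) - (y (A + s) + y (A + s + 1))) := by
        rw [← mul_sum, sum_range_sub' (fun r ↦ y (A + r) + y (A + r + 1)), add_zero]
    _ ≤ t * (2 * y A) := by
        refine mul_le_mul_of_nonneg_left ?_ ht.le
        linarith [hy A.le_succ, hy0 (A + s), hy0 (A + s + 1)]
  have halve (A : ℕ) : 2 * y (A + s) ≤ y A := by
    have := (mul_le_mul_of_nonneg_right hs (hy0 (A + s))).trans (telescope A)
    exact le_of_mul_le_mul_left (by linarith) (mul_pos two_pos ht)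
  induction m with
  | zero => simp
  | succ m ih =>
    calc 2 ^ (m + 1) * y ((m + 1) * s) = 2 ^ m * (2 * y (m * s + s)) := by rw [add_one_mul]; ring
      _ ≤ 2 ^ m * y (m * s) := by gcongr; exact halve _
      _ ≤ y 0 := ih

lemma two_pow_mul_permAvg_le [Nonempty ι] (hf0 : ∀ S, 0 ≤ f S) (hf : Antitone f) {φ : ℝ}
    (hφ : ∀ S, φ * f S ≤ ∑ i, (f (S.erase i) - f (insert i S)))
    {s : ℕ} (hs : 4 * Fintype.card ι ≤ φ * s) {m : ℕ} {B : Finset ι} (hB : #B = m * s) :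
    2 ^ m * permAvg f B ≤ f ∅ := by
  -- The mean depends on `#B` only, so it becomes a sequence `y`, with `y j = 0` past `card ι`.
  let y : ℕ → ℝ := extend card (permAvg f) 0
  have y_card (B : Finset ι) : y #B = permAvg f B :=
    (permAvg_factorsThrough_card f).extend_apply 0 B
  have y_or (j : ℕ) : (∃ B : Finset ι, #B = j) ∨ y j = 0 :=
    or_iff_not_imp_left.2 (extend_apply' _ _ j)
  have y_nonneg (j : ℕ) : 0 ≤ y j := by
    obtain ⟨B, rfl⟩ | hj := y_or j
    · exact y_card B ▸ permAvg_nonneg hf0 B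
    · exact hj.ge
  have y_antitone : Antitone y := antitone_nat_of_succ_le fun j ↦ by
    obtain ⟨B, hB⟩ | hj := y_or (j + 1)
    · obtain ⟨A, hAB, hA⟩ := exists_subset_card_eq (j.le_succ.trans_eq hB.symm)
      rw [← hB, ← hA, y_card, y_card]
      exact permAvg_antitone hf hAB
    · exact hj ▸ y_nonneg j
  have y_drop (j : ℕ) : φ * y (j + 1) ≤ Fintype.card ι * (y j - y (j + 2)) := by
    obtain ⟨B, hB⟩ | hj := y_or (j + 1)
    · rw [← hB, y_card]
      refine (mul_permAvg_le_sum hφ B).trans ?_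
      rw [← nsmul_eq_mul, ← card_univ]
      refine sum_le_card_nsmul _ _ _ fun i _ ↦ ?_
      rw [← y_card, ← y_card]
      have := card_insert_le i B
      have := pred_card_le_card_erase (s := B) (a := i)
      exact sub_le_sub (y_antitone (by omega)) (y_antitone (by omega))
    · rw [hj, mul_zero]
      exact mul_nonneg (Nat.cast_nonneg _) (sub_nonneg.2 (y_antitone (by omega)))
  have decay := two_pow_mul_le_of_antitone y_antitone y_nonneg
    (Nat.cast_pos.2 Fintype.card_pos) y_drop hs m
  have y_zero : y 0 = f ∅ := (y_card ∅).trans (permAvg_empty f)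
  rwa [← hB, y_card, y_zero] at decay

lemma exists_perm_forall_lt {κ : Type*} [Fintype κ] {f : κ → Finset ι → ℝ} {B : κ → Finset ι}
    (hf : ∀ k S, 0 ≤ f k S) {a : ℝ} (h : ∑ k, permAvg (f k) (B k) < a) :
    ∃ σ : Equiv.Perm ι, ∀ k, f k (σ • B k) < a := by
  simp only [permAvg, ← expect_sum_comm] at h
  obtain ⟨σ, -, hσ⟩ := exists_lt_of_expect_lt univ_nonempty h
  exact ⟨σ, fun k ↦
    (single_le_sum (f := fun k ↦ f k (σ • B k)) (fun k _ ↦ hf k _) (mem_univ k)).trans_lt hσ⟩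

end PermAvg

section Expander

variable {ι α : Type*}

lemma card_le_card_of_pairwiseDisjoint_of_meets {F : Finset (Finset α)} {X : Finset α}
    (hF : (F : Set (Finset α)).PairwiseDisjoint id) (hX : ∀ e ∈ F, ∃ x ∈ X, x ∈ e) : #F ≤ #X :=
  card_le_card_of_forall_subsingleton (fun e x ↦ x ∈ e) hX fun x _ _ he _ he' ↦
    hF.elim_finset he.1 he'.1 x he.2 he'.2

lemma monotone_logb_natCast {b : ℝ} (hb : 1 < b) : Monotone fun n : ℕ ↦ Real.logb b n := by
  intro m n hmn
  rcases m.eq_zero_or_pos with rfl | hm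
  · simp only [Nat.cast_zero, Real.logb_zero]
    exact div_nonneg (Real.log_natCast_nonneg n) (Real.log_nonneg hb.le)
  · exact Real.logb_le_logb_of_le hb (mod_cast hm) (mod_cast hmn)

lemma logb_two_natCast_nonneg (n : ℕ) : 0 ≤ Real.logb 2 n := by
  simpa only [Nat.cast_zero, Real.logb_zero] using monotone_logb_natCast one_lt_two n.zero_le

lemma one_le_logb_two_natCast {n : ℕ} (hn : 2 ≤ n) : 1 ≤ Real.logb 2 n := by
  simpa using monotone_logb_natCast one_lt_two hn

lemma natCast_lt_mul_mul_logb_two {n : ℕ} (hn : 2 ≤ n) {φ : ℝ} (hφ : 1 < φ) :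
    n < φ * (n * Real.logb 2 n) := by
  have : (0 : ℝ) < n := by positivity
  calc (n : ℝ) ≤ n * Real.logb 2 n := le_mul_of_one_le_right this.le (one_le_logb_two_natCast hn)
    _ < φ * (n * Real.logb 2 n) :=
      lt_mul_of_one_lt_left (mul_pos this (one_pos.trans_le (one_le_logb_two_natCast hn))) hφ

variable [DecidableEq α]

/-- The edges of `F` inside `V` that have a vertex in `U` and a vertex outside `U`: the edge
boundary of `U` in the subhypergraph induced on `V`. -/
def crossingEdges (F : Finset (Finset α)) (V U : Finset α) : Finset (Finset α) :=
  {e ∈ F | e ⊆ V ∧ ¬ e ⊆ U ∧ ¬ Disjoint e U}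

lemma exists_mem_of_mem_crossingEdges {F : Finset (Finset α)} {V U e : Finset α}
    (he : e ∈ crossingEdges F V U) :
    e ∈ F ∧ e ⊆ V ∧ (∃ u ∈ U, u ∈ e) ∧ ∃ w ∈ e, w ∉ U := by
  obtain ⟨heF, heV, heU, hdisj⟩ := mem_filter.1 he
  obtain ⟨u, hue, huU⟩ := not_disjoint_iff.1 hdisj
  exact ⟨heF, heV, ⟨u, huU, hue⟩, not_subset.1 heU⟩

lemma card_crossingEdges_le {F : Finset (Finset α)} (hF : (F : Set (Finset α)).PairwiseDisjoint id)
    (V U : Finset α) : #(crossingEdges F V U) ≤ #U :=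
  card_le_card_of_pairwiseDisjoint_of_meets (hF.subset (filter_subset _ _)) fun _ he ↦
    (exists_mem_of_mem_crossingEdges he).2.2.1

variable [Fintype ι]

/-- The number of edges inside `V` of a hypergraph with edge-colour classes `E i`; an edge carrying
several colours is counted once for each of them. -/
def inducedEdgeCount (E : ι → Finset (Finset α)) (V : Finset α) : ℕ :=
  ∑ i, #{e ∈ E i | e ⊆ V}

/-- The logarithmic edge expansion property, with constant `φ`, of the subhypergraph induced on `V`:
each `U ⊆ V` has at least `φ |U| log₂ (|V| / |U|)` crossing edges. -/
def IsLogExpander (E : ι → Finset (Finset α)) (V : Finset α) (φ : ℝ) : Prop :=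
  ∀ U ⊆ V, φ * (#U * (Real.logb 2 #V - Real.logb 2 #U)) ≤
    ∑ i, (#(crossingEdges (E i) V U) : ℝ)

lemma inducedEdgeCount_le (E : ι → Finset (Finset α)) (U V : Finset α) :
    inducedEdgeCount E V ≤ inducedEdgeCount E U + inducedEdgeCount E (V \ U) +
      ∑ i, #(crossingEdges (E i) V U) := by
  simp only [inducedEdgeCount, ← sum_add_distrib]
  refine sum_le_sum fun i _ ↦ ?_
  have cover : {e ∈ E i | e ⊆ V} ⊆
      ({e ∈ E i | e ⊆ U} ∪ {e ∈ E i | e ⊆ V \ U}) ∪ crossingEdges (E i) V U := by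
    intro e he
    simp only [crossingEdges, mem_union, mem_filter, subset_sdiff] at he ⊢
    tauto
  calc #{e ∈ E i | e ⊆ V}
      ≤ #({e ∈ E i | e ⊆ U} ∪ {e ∈ E i | e ⊆ V \ U}) + #(crossingEdges (E i) V U) :=
        (card_le_card cover).trans (card_union_le _ _)
    _ ≤ _ := Nat.add_le_add_right (card_union_le _ _) _

lemma inducedEdgeCount_eq_zero {E : ι → Finset (Finset α)} (hE : ∀ i, ∀ e ∈ E i, 2 ≤ #e)
    {V : Finset α} (hV : #V < 2) : inducedEdgeCount E V = 0 := by
  refine sum_eq_zero fun i _ ↦ card_eq_zero.2 (filter_eq_empty_iff.2 fun e he heV ↦ ?_)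
  have := card_le_card heV
  have := hE i e he
  omega

lemma isLogExpander_of_forall_inducedEdgeCount_le {E : ι → Finset (Finset α)} {V : Finset α}
    {φ : ℝ} (hφ : 0 ≤ φ) (hV : inducedEdgeCount E V = φ * (#V * Real.logb 2 #V))
    (hmax : ∀ U, inducedEdgeCount E U ≤ φ * (#U * Real.logb 2 #U)) : IsLogExpander E V φ := by
  intro U hUV
  have split : (inducedEdgeCount E V : ℝ) ≤ inducedEdgeCount E U + inducedEdgeCount E (V \ U) +
      ∑ i, (#(crossingEdges (E i) V U) : ℝ) := mod_cast inducedEdgeCount_le E U V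
  have card_V : (#V : ℝ) = #U + #(V \ U) := by
    rw [add_comm]
    exact mod_cast (card_sdiff_add_card_eq_card hUV).symm
  have entropy : #U * (Real.logb 2 #V - Real.logb 2 #U) ≤ #V * Real.logb 2 #V -
      #U * Real.logb 2 #U - #(V \ U) * Real.logb 2 #(V \ U) := by
    have : #(V \ U) * Real.logb 2 #(V \ U) ≤ #(V \ U) * Real.logb 2 #V :=
      mul_le_mul_of_nonneg_left
        (monotone_logb_natCast one_lt_two (card_le_card sdiff_subset)) (Nat.cast_nonneg _)
    rw [card_V] at this ⊢
    linarith
  linarith [mul_le_mul_of_nonneg_left entropy hφ, hmax U, hmax (V \ U)]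

lemma exists_isLogExpander [Fintype α] [Nontrivial α] {E : ι → Finset (Finset α)}
    (hE : ∀ i, ∀ e ∈ E i, 2 ≤ #e) :
    ∃ (V : Finset α) (φ : ℝ), 2 ≤ #V ∧ IsLogExpander E V φ ∧
      inducedEdgeCount E V = φ * (#V * Real.logb 2 #V) ∧
      ∑ i, (#(E i) : ℝ) ≤ φ * (Fintype.card α * Real.logb 2 (Fintype.card α)) := by
  let density (V : Finset α) : ℝ := inducedEdgeCount E V / (#V * Real.logb 2 #V)
  have size_pos {V : Finset α} (hV : 2 ≤ #V) : 0 < #V * Real.logb 2 #V :=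
    mul_pos (by positivity) (one_pos.trans_le (one_le_logb_two_natCast hV))
  obtain ⟨V, hV, hmax⟩ := exists_max_image ({V | 2 ≤ #V} : Finset (Finset α)) density
    ⟨univ, by simpa using! Fintype.one_lt_card⟩
  simp only [mem_filter, mem_univ, true_and] at hV hmax
  have density_nonneg : 0 ≤ density V := div_nonneg (Nat.cast_nonneg _) (size_pos hV).le
  have count_V : inducedEdgeCount E V = density V * (#V * Real.logb 2 #V) :=
    (div_mul_cancel₀ _ (size_pos hV).ne').symm
  have count_le (U : Finset α) : inducedEdgeCount E U ≤ density V * (#U * Real.logb 2 #U) := by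
    obtain hU | hU := le_or_gt 2 #U
    · exact (div_le_iff₀ (size_pos hU)).1 (hmax U hU)
    · rw [inducedEdgeCount_eq_zero hE hU, Nat.cast_zero]
      exact mul_nonneg density_nonneg (mul_nonneg (Nat.cast_nonneg _) (logb_two_natCast_nonneg _))
  refine ⟨V, density V, hV, isLogExpander_of_forall_inducedEdgeCount_le density_nonneg count_V
    count_le, count_V, ?_⟩
  simpa [inducedEdgeCount] using count_le univ

lemma exists_isLogExpander_of_forall_le_card [Fintype α] [Nontrivial α]
    {E : ι → Finset (Finset α)} (hE : ∀ i, ∀ e ∈ E i, 2 ≤ #e) {δ : ℝ}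
    (hδ : ∀ i, δ * Fintype.card α ≤ #(E i)) :
    ∃ (V : Finset α) (φ : ℝ), 2 ≤ #V ∧ IsLogExpander E V φ ∧
      inducedEdgeCount E V = φ * (#V * Real.logb 2 #V) ∧
      δ * Fintype.card ι ≤ φ * Real.logb 2 (Fintype.card α) := by
  obtain ⟨V, φ, hV, hexp, hcount, hφ⟩ := exists_isLogExpander hE
  refine ⟨V, φ, hV, hexp, hcount,
    le_of_mul_le_mul_right ?_ (Nat.cast_pos.2 (Fintype.card_pos (α := α)))⟩
  calc δ * Fintype.card ι * Fintype.card α = ∑ _i : ι, δ * Fintype.card α := by simp; ring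
    _ ≤ ∑ i, (#(E i) : ℝ) := sum_le_sum fun i _ ↦ hδ i
    _ ≤ φ * (Fintype.card α * Real.logb 2 (Fintype.card α)) := hφ
    _ = φ * Real.logb 2 (Fintype.card α) * Fintype.card α := by ring

end Expander

section Reachability

variable {ι α : Type*} [DecidableEq ι]

/-- `RainbowReachable E a S b`: some walk from `a` to `b` in the hypergraph with edge-colour classes
`E i` uses each colour at most once, and only colours from `S`. -/
inductive RainbowReachable (E : ι → Finset (Finset α)) (a : α) : Finset ι → α → Prop
  | refl (S : Finset ι) : RainbowReachable E a S a
  | step {S : Finset ι} {i : ι} {e : Finset α} {u w : α} : i ∉ S → e ∈ E i → u ∈ e → w ∈ e →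
      RainbowReachable E a S u → RainbowReachable E a (insert i S) w

lemma RainbowReachable.mono {E : ι → Finset (Finset α)} {a b : α} {S T : Finset ι}
    (h : RainbowReachable E a S b) (hST : S ⊆ T) : RainbowReachable E a T b := by
  induction h generalizing T with
  | refl S => exact .refl T
  | @step S i e u w hi he hu hw _ ih =>
    obtain ⟨hiT, hST⟩ := insert_subset_iff.1 hST
    rw [← insert_erase hiT]
    exact .step (notMem_erase i T) he hu hw (ih (subset_erase.2 ⟨hST, hi⟩))

open Classical in
/-- The vertices of `V` that are rainbow reachable from `a` with colours in `S`. -/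
noncomputable def reachSet (E : ι → Finset (Finset α)) (V : Finset α) (a : α) (S : Finset ι) :
    Finset α :=
  {b ∈ V | RainbowReachable E a S b}

/-- The potential `log₂ (|V| / |R|)`, where `R` is the set of vertices of `V` rainbow reachable from
`a` with colours in `S`; it vanishes once all of `V` is reached. -/
noncomputable def reachDeficit (E : ι → Finset (Finset α)) (V : Finset α) (a : α)
    (S : Finset ι) : ℝ :=
  Real.logb 2 #V - Real.logb 2 #(reachSet E V a S)

variable {E : ι → Finset (Finset α)} {V : Finset α} {a : α}

lemma mem_reachSet {S : Finset ι} {b : α} :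
    b ∈ reachSet E V a S ↔ b ∈ V ∧ RainbowReachable E a S b := by
  simp [reachSet]

lemma reachSet_subset (S : Finset ι) : reachSet E V a S ⊆ V := fun _ hb ↦
  (mem_reachSet.1 hb).1

lemma card_reachSet_pos (ha : a ∈ V) (S : Finset ι) : 0 < #(reachSet E V a S) :=
  card_pos.2 ⟨a, mem_reachSet.2 ⟨ha, .refl S⟩⟩

lemma reachSet_mono : Monotone (reachSet E V a) := fun _ _ hST _ hb ↦
  mem_reachSet.2 ((mem_reachSet.1 hb).imp_right (·.mono hST))

lemma reachDeficit_nonneg (S : Finset ι) : 0 ≤ reachDeficit E V a S :=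
  sub_nonneg.2 (monotone_logb_natCast one_lt_two (card_le_card (reachSet_subset S)))

lemma reachDeficit_antitone : Antitone (reachDeficit E V a) := fun _ _ hST ↦
  sub_le_sub_left (monotone_logb_natCast one_lt_two (card_le_card (reachSet_mono hST))) _

lemma reachDeficit_le (S : Finset ι) : reachDeficit E V a S ≤ Real.logb 2 #V :=
  sub_le_self _ (logb_two_natCast_nonneg _)

lemma card_lt_two_mul_card_reachSet (ha : a ∈ V) {S : Finset ι}
    (hS : reachDeficit E V a S < 1) : #V < 2 * #(reachSet E V a S) := by
  have hR := card_reachSet_pos (E := E) ha S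
  have : Real.logb 2 #V < Real.logb 2 (2 * #(reachSet E V a S) : ℕ) := by
    push_cast
    rw [Real.logb_mul two_ne_zero (by positivity), Real.logb_self_eq_one one_lt_two]
    linarith [reachDeficit.eq_def E V a S]
  by_contra! hle
  exact this.not_ge (monotone_logb_natCast one_lt_two hle)

lemma le_logb_two_one_add {x : ℝ} (hx0 : 0 ≤ x) (hx1 : x ≤ 1) : x ≤ Real.logb 2 (1 + x) := by
  rw [Real.le_logb_iff_rpow_le one_lt_two (by linarith)]
  simpa [one_add_one_eq_two] using! rpow_one_add_le_one_add_mul_self (s := 1) (by norm_num) hx0 hx1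

lemma one_sub_inv_le_logb_two {x : ℝ} (hx : 1 ≤ x) : 1 - x⁻¹ ≤ Real.logb 2 x :=
  (Real.one_sub_inv_le_log_of_pos (one_pos.trans_le hx)).trans <|
    le_div_self (Real.log_nonneg hx) (Real.log_pos one_lt_two)
      (Real.log_two_lt_d9.le.trans (by norm_num))

variable [DecidableEq α]

lemma card_crossingEdges_add_card_reachSet_le_insert {i : ι}
    (hE : (E i : Set (Finset α)).PairwiseDisjoint id) {S : Finset ι} (hi : i ∉ S) :
    #(crossingEdges (E i) V (reachSet E V a S)) + #(reachSet E V a S) ≤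
      #(reachSet E V a (insert i S)) := by
  rw [← card_sdiff_add_card_eq_card (reachSet_mono (subset_insert i S))]
  gcongr
  refine card_le_card_of_pairwiseDisjoint_of_meets (hE.subset (filter_subset _ _)) fun e he ↦ ?_
  obtain ⟨heE, heV, ⟨u, huR, hue⟩, w, hwe, hwR⟩ := exists_mem_of_mem_crossingEdges he
  have hw : RainbowReachable E a (insert i S) w := .step hi heE hue hwe (mem_reachSet.1 huR).2
  exact ⟨w, mem_sdiff.2 ⟨mem_reachSet.2 ⟨heV hwe, hw⟩, hwR⟩, hwe⟩

-- The vertex of a crossing edge of colour `i` in the reachable set is lost when `i` is deleted from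
-- `S`, for otherwise that edge would extend a walk to a vertex outside the reachable set.
lemma card_crossingEdges_add_card_reachSet_erase_le {i : ι}
    (hE : (E i : Set (Finset α)).PairwiseDisjoint id) {S : Finset ι} (hi : i ∈ S) :
    #(crossingEdges (E i) V (reachSet E V a S)) + #(reachSet E V a (S.erase i)) ≤
      #(reachSet E V a S) := by
  conv_rhs => rw [← card_sdiff_add_card_eq_card (reachSet_mono (S.erase_subset i))]
  gcongr
  refine card_le_card_of_pairwiseDisjoint_of_meets (hE.subset (filter_subset _ _)) fun e he ↦ ?_
  obtain ⟨heE, heV, ⟨u, huR, hue⟩, w, hwe, hwR⟩ := exists_mem_of_mem_crossingEdges he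
  refine ⟨u, mem_sdiff.2 ⟨huR, fun hu ↦ hwR (mem_reachSet.2 ⟨heV hwe, ?_⟩)⟩, hue⟩
  rw [← insert_erase hi]
  exact .step (notMem_erase i S) heE hue hwe (mem_reachSet.1 hu).2

lemma crossingEdges_div_le_reachDeficit_sub {i : ι}
    (hE : (E i : Set (Finset α)).PairwiseDisjoint id) (ha : a ∈ V) (S : Finset ι) :
    (#(crossingEdges (E i) V (reachSet E V a S)) : ℝ) / #(reachSet E V a S) ≤
      reachDeficit E V a (S.erase i) - reachDeficit E V a (insert i S) := by
  set x := #(crossingEdges (E i) V (reachSet E V a S)) with hx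
  have hR (T : Finset ι) : (0 : ℝ) < #(reachSet E V a T) := mod_cast card_reachSet_pos ha T
  have drop_eq : reachDeficit E V a (S.erase i) - reachDeficit E V a (insert i S) =
      Real.logb 2 (#(reachSet E V a (insert i S)) / #(reachSet E V a (S.erase i))) := by
    rw [Real.logb_div (hR _).ne' (hR _).ne', reachDeficit, reachDeficit, sub_sub_sub_cancel_left]
  rw [drop_eq]
  by_cases hi : i ∈ S
  · have growth : (x + #(reachSet E V a (S.erase i)) : ℝ) ≤ #(reachSet E V a S) :=
      mod_cast card_crossingEdges_add_card_reachSet_erase_le hE hi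
    rw [insert_eq_of_mem hi]
    refine le_trans ?_ (one_sub_inv_le_logb_two ((one_le_div (hR _)).2 ?_))
    · rw [inv_div, ← div_self (hR S).ne', ← sub_div]
      gcongr
      linarith
    · linarith [(Nat.cast_nonneg x : (0 : ℝ) ≤ x)]
  · have growth : (x + #(reachSet E V a S) : ℝ) ≤ #(reachSet E V a (insert i S)) :=
      mod_cast card_crossingEdges_add_card_reachSet_le_insert hE hi
    have x_le : (x : ℝ) ≤ #(reachSet E V a S) := mod_cast card_crossingEdges_le hE V _
    rw [erase_eq_of_notMem hi]
    refine (le_logb_two_one_add (by positivity) ((div_le_one (hR S)).2 x_le)).trans ?_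
    refine Real.logb_le_logb_of_le one_lt_two (by positivity) ?_
    rw [one_add_div (hR S).ne']
    gcongr
    linarith

lemma IsLogExpander.mul_reachDeficit_le [Fintype ι] {φ : ℝ} (hV : IsLogExpander E V φ)
    (hE : ∀ i, (E i : Set (Finset α)).PairwiseDisjoint id) (ha : a ∈ V) (S : Finset ι) :
    φ * reachDeficit E V a S ≤
      ∑ i, (reachDeficit E V a (S.erase i) - reachDeficit E V a (insert i S)) := by
  have hR := card_reachSet_pos (E := E) ha S
  refine le_trans ?_ (sum_le_sum fun i _ ↦ crossingEdges_div_le_reachDeficit_sub (hE i) ha S)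
  rw [← sum_div, le_div_iff₀ (mod_cast hR)]
  have : φ * (#(reachSet E V a S) * reachDeficit E V a S) ≤ _ := hV _ (reachSet_subset S)
  linarith

end Reachability

section Bridge

variable {ι α : Type*}

/-- A linkage of two `r`-edges of distinct colours: for each `k < r`, the `k`-th vertices of the two
edges are joined to a common vertex `meet k` by rainbow walks, and the `2 r` walks use disjoint sets
of colours, which also avoid the colours of the two edges. -/
structure RainbowBridge [DecidableEq ι] (E : ι → Finset (Finset α)) (r : ℕ) where
  color : Fin 2 → ι
  color_injective : Injective color
  vertex : Fin 2 → Fin r ↪ α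
  map_vertex_mem : ∀ q, univ.map (vertex q) ∈ E (color q)
  pathColors : Fin 2 × Fin r → Finset ι
  pairwise_disjoint : Pairwise (Disjoint on pathColors)
  color_notMem : ∀ q p, color q ∉ pathColors p
  meet : Fin r → α
  reachable : ∀ q k, RainbowReachable E (vertex q k) (pathColors (q, k)) (meet k)

lemma exists_embedding_map_univ_eq {r : ℕ} {e : Finset α} (he : #e = r) :
    ∃ f : Fin r ↪ α, univ.map f = e := by
  refine ⟨(equivFinOfCardEq he).symm.toEmbedding.trans (.subtype _), ?_⟩
  rw [← map_map, map_univ_equiv, univ_eq_attach, attach_map_val]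

lemma exists_pairwise_disjoint_card_eq [Fintype ι] {κ : Type*} [Fintype κ] {b : ℕ}
    (hb : Fintype.card κ * b ≤ Fintype.card ι) :
    ∃ B : κ → Finset ι, Pairwise (Disjoint on B) ∧ ∀ p, #(B p) = b := by
  obtain ⟨f⟩ : Nonempty (κ × Fin b ↪ ι) := Embedding.nonempty_of_card_le (by simpa using hb)
  refine ⟨fun p ↦ univ.map ((Embedding.sectR p (Fin b)).trans f), fun p q hpq ↦ ?_, by simp⟩
  simp only [onFun, disjoint_left, mem_map, mem_univ, true_and, Embedding.trans_apply,
    Embedding.sectR_apply]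
  rintro _ ⟨x, rfl⟩ ⟨y, hy⟩
  exact hpq (congrArg Prod.fst (f.injective hy)).symm

lemma exists_disjoint_blocks_forall_lt [Fintype ι] [DecidableEq ι] {κ : Type*} [Fintype κ]
    {f : κ → Finset ι → ℝ} (hf : ∀ p S, 0 ≤ f p S) {b : ℕ} {ε : ℝ}
    (hε : ∀ p B, #B = b → permAvg (f p) B ≤ ε) (hb : Fintype.card κ * b ≤ Fintype.card ι)
    {C : Finset ι} (hC : Fintype.card κ * (ε + #C * b / Fintype.card ι) < 1) :
    ∃ P : κ → Finset ι, Pairwise (Disjoint on P) ∧ (∀ p, Disjoint C (P p)) ∧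
      ∀ p, f p (P p) < 1 := by
  obtain ⟨B, hB, card_B⟩ := exists_pairwise_disjoint_card_eq hb
  set U := univ.biUnion B
  have hit_le (i : ι) : permAvg (fun S ↦ if i ∈ S then 1 else 0) U ≤
      Fintype.card κ * b / Fintype.card ι := by
    have card_U : (#U : ℝ) ≤ Fintype.card κ * b := by
      exact_mod_cast card_biUnion_le_card_mul univ B b fun p _ ↦ (card_B p).le
    rwa [le_div_iff₀' (mod_cast Fintype.card_pos_iff.2 ⟨i⟩), card_mul_permAvg_mem]
  obtain ⟨σ, hσ⟩ := exists_perm_forall_lt (κ := κ ⊕ C) (a := 1)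
    (f := Sum.elim f fun i S ↦ if (i : ι) ∈ S then 1 else 0) (B := Sum.elim B fun _ ↦ U)
    (by rintro (p | i) S <;> simp only [Sum.elim_inl, Sum.elim_inr]; exacts [hf p S, by positivity])
    (by
      simp only [Fintype.sum_sum_type, Sum.elim_inl, Sum.elim_inr]
      calc _ ≤ ∑ _p : κ, ε + ∑ _i : C, (Fintype.card κ * b / Fintype.card ι : ℝ) :=
            add_le_add (sum_le_sum fun p _ ↦ hε p _ (card_B p)) (sum_le_sum fun i _ ↦ hit_le i)
        _ = Fintype.card κ * (ε + #C * b / Fintype.card ι) := by simp; ring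
        _ < 1 := hC)
  refine ⟨fun p ↦ σ • B p, fun p q hpq ↦ ?_, fun p ↦ ?_, fun p ↦ hσ (.inl p)⟩
  · exact (disjoint_image (MulAction.injective σ)).2 (hB hpq)
  · refine disjoint_left.2 fun i hi hiB ↦ ?_
    have hiU : i ∈ σ • U :=
      smul_finset_subset_smul_finset (subset_biUnion_of_mem B (mem_univ p)) hiB
    simpa [hiU] using hσ (.inr ⟨i, hi⟩)

lemma exists_rainbowReachable_of_reachDeficit_lt_one [DecidableEq ι] {E : ι → Finset (Finset α)}
    {V : Finset α} {a b : α} {S T : Finset ι} (ha : a ∈ V) (hb : b ∈ V)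
    (hS : reachDeficit E V a S < 1) (hT : reachDeficit E V b T < 1) :
    ∃ c, RainbowReachable E a S c ∧ RainbowReachable E b T c := by
  classical
  have hlt : #V < #(reachSet E V a S) + #(reachSet E V b T) := by
    have := card_lt_two_mul_card_reachSet ha hS
    have := card_lt_two_mul_card_reachSet hb hT
    omega
  obtain ⟨c, hc⟩ := inter_nonempty_of_card_lt_card_add_card (reachSet_subset S)
    (reachSet_subset T) hlt
  obtain ⟨haS, hbT⟩ := mem_inter.1 hc
  exact ⟨c, (mem_reachSet.1 haS).2, (mem_reachSet.1 hbT).2⟩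

variable [DecidableEq α] [Fintype ι]

lemma exists_two_colors {E : ι → Finset (Finset α)}
    (hE : ∀ i, (E i : Set (Finset α)).PairwiseDisjoint id) (hE0 : ∀ i, ∀ e ∈ E i, e.Nonempty)
    {V : Finset α} (hV : #V < inducedEdgeCount E V) :
    ∃ color : Fin 2 → ι, Injective color ∧ ∀ q, ∃ e ∈ E (color q), e ⊆ V := by
  have card_le (i : ι) : #{e ∈ E i | e ⊆ V} ≤ #V :=
    card_le_card_of_pairwiseDisjoint_of_meets ((hE i).subset (filter_subset _ _)) fun e he ↦ by
      obtain ⟨heE, heV⟩ := mem_filter.1 he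
      obtain ⟨x, hx⟩ := hE0 i e heE
      exact ⟨x, heV hx, hx⟩
  let K : Finset ι := {i | {e ∈ E i | e ⊆ V}.Nonempty}
  have count_le : inducedEdgeCount E V ≤ #K * #V := calc
    inducedEdgeCount E V = ∑ i ∈ K, #{e ∈ E i | e ⊆ V} :=
      (sum_filter_of_ne fun i _ hi ↦ card_ne_zero.1 hi).symm
    _ ≤ #K * #V := sum_le_card_nsmul _ _ _ fun i _ ↦ card_le i
  have one_lt : 1 < #K := Nat.lt_of_mul_lt_mul_right (a := #V) (by omega)
  obtain ⟨f⟩ : Nonempty (Fin 2 ↪ K) :=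
    Embedding.nonempty_of_card_le (by simpa using one_lt.nat_succ_le)
  refine ⟨fun q ↦ f q, Subtype.val_injective.comp f.injective, fun q ↦ ?_⟩
  obtain ⟨e, he⟩ := (mem_filter.1 (f q).2).2
  exact ⟨e, mem_filter.1 he⟩

variable [DecidableEq ι]

lemma IsLogExpander.exists_disjoint_colors_reachDeficit_lt_one {E : ι → Finset (Finset α)}
    {V : Finset α} {φ : ℝ} (hV : IsLogExpander E V φ)
    (hE : ∀ i, (E i : Set (Finset α)).PairwiseDisjoint id) {κ : Type*} [Fintype κ] {a : κ → α}
    (ha : ∀ p, a p ∈ V) {C : Finset ι} (hC : C.Nonempty) {s m : ℕ}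
    (hs : 4 * Fintype.card ι ≤ φ * s) (hm : 2 * Fintype.card κ * Real.logb 2 #V < 2 ^ m)
    (hms : 2 * Fintype.card κ * #C * (m * s) ≤ Fintype.card ι) :
    ∃ P : κ → Finset ι, Pairwise (Disjoint on P) ∧ (∀ p, Disjoint C (P p)) ∧
      ∀ p, reachDeficit E V (a p) (P p) < 1 := by
  have : Nonempty ι := ⟨hC.choose⟩
  have deficit_le (p : κ) (B : Finset ι) (hB : #B = m * s) :
      permAvg (reachDeficit E V (a p)) B ≤ Real.logb 2 #V / 2 ^ m := by
    rw [le_div_iff₀' (by positivity)]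
    exact (two_pow_mul_permAvg_le reachDeficit_nonneg reachDeficit_antitone
      (hV.mul_reachDeficit_le hE (ha p)) hs hB).trans (reachDeficit_le ∅)
  have deficit_bound : Fintype.card κ * (Real.logb 2 #V / 2 ^ m) < 1 / 2 := by
    rw [← mul_div_assoc, div_lt_iff₀ (by positivity)]
    linarith
  have collision_bound : (Fintype.card κ * (#C * (m * s : ℕ) / Fintype.card ι) : ℝ) ≤ 1 / 2 := by
    rw [← mul_div_assoc, div_le_iff₀ (mod_cast Fintype.card_pos)]
    have : (2 * Fintype.card κ * #C * (m * s : ℕ) : ℝ) ≤ Fintype.card ι := mod_cast hms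
    linarith
  have room : Fintype.card κ * (m * s) ≤ Fintype.card ι := by
    refine le_trans (Nat.mul_le_mul_right _ ?_) hms
    nlinarith [hC.card_pos]
  exact exists_disjoint_blocks_forall_lt (fun p ↦ reachDeficit_nonneg) deficit_le room
    (by rw [mul_add]; linarith)

lemma IsLogExpander.nonempty_rainbowBridge {E : ι → Finset (Finset α)} {V : Finset α} {φ : ℝ}
    (hV : IsLogExpander E V φ) (hE : ∀ i, (E i : Set (Finset α)).PairwiseDisjoint id) {r : ℕ}
    (hr : 0 < r) (hEr : ∀ i, ∀ e ∈ E i, #e = r) (hcount : #V < inducedEdgeCount E V) {s m : ℕ}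
    (hs : 4 * Fintype.card ι ≤ φ * s) (hm : 4 * r * Real.logb 2 #V < 2 ^ m)
    (hms : 8 * r * (m * s) ≤ Fintype.card ι) : Nonempty (RainbowBridge E r) := by
  obtain ⟨color, hcolor, hedge⟩ := exists_two_colors hE
    (fun i e he ↦ card_pos.1 (hr.trans_eq (hEr i e he).symm)) hcount
  choose e heE heV using hedge
  choose vertex hvertex using fun q ↦ exists_embedding_map_univ_eq (hEr _ _ (heE q))
  have vertex_mem (q : Fin 2) (k : Fin r) : vertex q k ∈ V :=
    heV q (hvertex q ▸ mem_map_of_mem _ (mem_univ k))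
  have card_colors : #(univ.map ⟨color, hcolor⟩) = 2 := by
    rw [card_map, card_univ, Fintype.card_fin]
  obtain ⟨P, hP, color_disjoint, deficit_lt⟩ := hV.exists_disjoint_colors_reachDeficit_lt_one hE
    (a := fun p : Fin 2 × Fin r ↦ vertex p.1 p.2) (fun p ↦ vertex_mem p.1 p.2)
    (C := univ.map ⟨color, hcolor⟩) (card_pos.1 (by omega)) hs
    (by simp only [Fintype.card_prod, Fintype.card_fin, Nat.cast_mul, Nat.cast_ofNat]; linarith)
    (by simp only [Fintype.card_prod, Fintype.card_fin, card_colors]; linarith)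
  choose meet hmeet using fun k ↦ exists_rainbowReachable_of_reachDeficit_lt_one (vertex_mem 0 k)
    (vertex_mem 1 k) (deficit_lt (0, k)) (deficit_lt (1, k))
  exact ⟨{
    color, color_injective := hcolor
    vertex, map_vertex_mem := fun q ↦ (hvertex q).symm ▸ heE q
    pathColors := P, pairwise_disjoint := hP
    color_notMem := fun q p ↦ disjoint_left.1 (color_disjoint p) (mem_map_of_mem _ (mem_univ q))
    meet, reachable := fun q k ↦ by
      obtain rfl | rfl : q = 0 ∨ q = 1 := by omega
      exacts [(hmeet k).1, (hmeet k).2] }⟩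

end Bridge

lemma nonempty_rainbowBridge {ι α : Type*} [Fintype ι] [DecidableEq ι] [Fintype α]
    [Nontrivial α] {E : ι → Finset (Finset α)}
    (hE : ∀ i, (E i : Set (Finset α)).PairwiseDisjoint id) {r : ℕ} (hr : 2 ≤ r)
    (hEr : ∀ i, ∀ e ∈ E i, #e = r) {δ : ℝ} (hδ : ∀ i, δ * Fintype.card α ≤ #(E i)) {s m : ℕ}
    (hs : 4 * Real.logb 2 (Fintype.card α) ≤ δ * s)
    (hm : 4 * r * Real.logb 2 (Fintype.card α) < 2 ^ m)
    (hms : 8 * r * (m * s) ≤ Fintype.card ι) : Nonempty (RainbowBridge E r) := by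
  classical
  obtain ⟨V, φ, hV, hexp, hcount, hφ⟩ := exists_isLogExpander_of_forall_le_card
    (fun i e he ↦ hr.trans_eq (hEr i e he).symm) hδ
  have log_pos : 0 < Real.logb 2 (Fintype.card α) :=
    one_pos.trans_le (one_le_logb_two_natCast Fintype.one_lt_card)
  have hs' : 4 * Fintype.card ι ≤ φ * s := by
    refine le_of_mul_le_mul_right ?_ log_pos
    calc 4 * Fintype.card ι * Real.logb 2 (Fintype.card α)
        = Fintype.card ι * (4 * Real.logb 2 (Fintype.card α)) := by ring
      _ ≤ Fintype.card ι * (δ * s) := by gcongr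
      _ = δ * Fintype.card ι * s := by ring
      _ ≤ φ * Real.logb 2 (Fintype.card α) * s := by gcongr
      _ = _ := by ring
  have s_pos : 0 < s := Nat.pos_of_ne_zero fun h ↦ by
    rw [h, Nat.cast_zero, mul_zero] at hs
    linarith
  have m_pos : 0 < m := Nat.pos_of_ne_zero fun h ↦ by
    have : (2 : ℝ) ≤ r := mod_cast hr
    rw [h, pow_zero] at hm
    nlinarith [one_le_logb_two_natCast (Fintype.one_lt_card (α := α))]
  have one_lt : 1 < φ := by
    have : 2 * s ≤ 4 * Fintype.card ι := by
      have : r * s ≤ r * (m * s) := Nat.mul_le_mul_left r (Nat.le_mul_of_pos_left s m_pos)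
      nlinarith
    have : (2 * s : ℝ) ≤ φ * s := le_trans (mod_cast this) hs'
    exact one_lt_two.trans_le (le_of_mul_le_mul_right this (mod_cast s_pos))
  refine hexp.nonempty_rainbowBridge hE (by omega) hEr ?_ hs' (hm.trans_le' ?_) hms
  · exact_mod_cast hcount ▸ natCast_lt_mul_mul_logb_two hV one_lt
  · exact mul_le_mul_of_nonneg_left
      (monotone_logb_natCast one_lt_two (card_le_univ V)) (by positivity)

section SumOfAtMost

variable {ι α W : Type*} [AddCommGroup W] {v : α → W} {x y : W} {m n : ℕ}

/-- `x` is a sum of at most `m` of the vectors `v i`, taken at distinct indices. -/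
def IsSumOfAtMost (v : α → W) (m : ℕ) (x : W) : Prop :=
  ∃ J : Finset α, #J ≤ m ∧ x = ∑ i ∈ J, v i

lemma isSumOfAtMost_sum (v : α → W) (J : Finset α) : IsSumOfAtMost v #J (∑ i ∈ J, v i) :=
  ⟨J, le_rfl, rfl⟩

variable [Module (ZMod 2) W]

lemma IsSumOfAtMost.add (hx : IsSumOfAtMost v m x) (hy : IsSumOfAtMost v n y) :
    IsSumOfAtMost v (m + n) (x + y) := by
  classical
  obtain ⟨J, hJ, rfl⟩ := hx
  obtain ⟨K, hK, rfl⟩ := hy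
  refine ⟨symmDiff J K, ?_, ?_⟩
  · exact (card_le_card symmDiff_subset_union).trans ((card_union_le J K).trans (by omega))
  · have inter_cancel : ∑ i ∈ J ∩ K, v i + ∑ i ∈ J ∩ K, v i = 0 := ZModModule.add_self _
    rw [symmDiff_def, sup_eq_union, sum_union disjoint_sdiff_sdiff, ← sum_inter_add_sum_sdiff J K,
      ← sum_inter_add_sum_sdiff K J, inter_comm K J, add_add_add_comm, inter_cancel, zero_add]

lemma IsSumOfAtMost.sum {κ : Type*} (s : Finset κ) {m : κ → ℕ} {x : κ → W}
    (h : ∀ p ∈ s, IsSumOfAtMost v (m p) (x p)) :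
    IsSumOfAtMost v (∑ p ∈ s, m p) (∑ p ∈ s, x p) := by
  classical
  induction s using Finset.induction_on with
  | empty => exact isSumOfAtMost_sum v ∅
  | insert p s hp ih =>
    rw [sum_insert hp, sum_insert hp]
    exact (h p (mem_insert_self p s)).add (ih fun q hq ↦ h q (mem_insert_of_mem hq))

lemma exists_isSumOfAtMost_of_mem_span (hx : x ∈ Submodule.span (ZMod 2) (Set.range v)) :
    ∃ m, IsSumOfAtMost v m x := by
  induction hx using Submodule.span_induction with
  | mem _ h =>
    obtain ⟨i, rfl⟩ := h
    exact ⟨1, {i}, by simp⟩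
  | zero => exact ⟨0, isSumOfAtMost_sum v ∅⟩
  | add _ _ _ _ hy hz =>
    obtain ⟨m, hm⟩ := hy
    obtain ⟨n, hn⟩ := hz
    exact ⟨m + n, hm.add hn⟩
  | smul c _ _ h =>
    obtain rfl | rfl : c = 0 ∨ c = 1 := by decide +revert
    · exact ⟨0, by simpa using isSumOfAtMost_sum v ∅⟩
    · simpa using h

lemma exists_sum_eq_forall_subset_card_le (hx : x ∈ Submodule.span (ZMod 2) (Set.range v)) :
    ∃ I : Finset α, x = ∑ i ∈ I, v i ∧
      ∀ Q ⊆ I, ∀ m, IsSumOfAtMost v m (∑ i ∈ Q, v i) → #Q ≤ m := by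
  classical
  have hex := exists_isSumOfAtMost_of_mem_span hx
  obtain ⟨I, hI, hxI⟩ := Nat.find_spec hex
  refine ⟨I, hxI, fun Q hQ m hm ↦ ?_⟩
  have shorter : IsSumOfAtMost v (#(I \ Q) + m) x := by
    rw [hxI, ← sum_sdiff hQ]
    exact (isSumOfAtMost_sum v _).add hm
  have := hI.trans (Nat.find_min' hex shorter)
  have := card_sdiff_add_card_eq_card hQ
  omega

variable [DecidableEq ι] {E : ι → Finset (Finset α)} {w : ι → W} {r : ℕ}

lemma RainbowReachable.exists_isSumOfAtMost (hEr : ∀ i, ∀ e ∈ E i, #e = r)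
    (hw : ∀ i, ∀ e ∈ E i, w i = ∑ a ∈ e, v a) {a b : α} {S : Finset ι}
    (h : RainbowReachable E a S b) :
    ∃ T ⊆ S, IsSumOfAtMost v ((r - 2) * #T) (v a + v b + ∑ i ∈ T, w i) := by
  classical
  induction h with
  | refl S => exact ⟨∅, empty_subset S, by simpa [ZModModule.add_self] using isSumOfAtMost_sum v ∅⟩
  | @step S i e b c hi he hb hc _ ih =>
    obtain ⟨T, hTS, hT⟩ := ih
    obtain rfl | hbc := eq_or_ne b c
    · exact ⟨T, hTS.trans (subset_insert i S), hT⟩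
    have hiT : i ∉ T := fun h ↦ hi (hTS h)
    have hcb : c ∈ e.erase b := mem_erase.2 ⟨hbc.symm, hc⟩
    have edge_sum : w i = v b + (v c + ∑ a ∈ (e.erase b).erase c, v a) := by
      rw [add_sum_erase _ _ hcb, add_sum_erase _ _ hb, hw i e he]
    have edge_card : #((e.erase b).erase c) = r - 2 := by
      rw [card_erase_of_mem hcb, card_erase_of_mem hb, hEr i e he, Nat.sub_sub]
    refine ⟨insert i T, insert_subset_insert i hTS, ?_⟩
    convert hT.add (isSumOfAtMost_sum v ((e.erase b).erase c)) using 1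
    · rw [card_insert_of_notMem hiT, edge_card, mul_add_one]
    · have cancel_c : v c + v c = 0 := ZModModule.add_self _
      rw [sum_insert hiT, edge_sum, ← sub_eq_zero, ← cancel_c]
      abel

lemma RainbowBridge.exists_isSumOfAtMost (B : RainbowBridge E r) (hEr : ∀ i, ∀ e ∈ E i, #e = r)
    (hw : ∀ i, ∀ e ∈ E i, w i = ∑ a ∈ e, v a) :
    ∃ (Q : Finset ι) (m : ℕ), #Q = m + 2 ∧ IsSumOfAtMost v ((r - 2) * m) (∑ i ∈ Q, w i) := by
  choose T hT hTv using fun p : Fin 2 × Fin r ↦ (B.reachable p.1 p.2).exists_isSumOfAtMost hEr hw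
  have T_disjoint : ((univ : Finset (Fin 2 × Fin r)) : Set _).PairwiseDisjoint T :=
    fun p _ q _ hpq ↦ (B.pairwise_disjoint hpq).mono (hT p) (hT q)
  let ends : Finset ι := univ.map ⟨B.color, B.color_injective⟩
  have ends_disjoint : Disjoint ends (univ.biUnion T) := by
    rw [disjoint_biUnion_right]
    refine fun p _ ↦ disjoint_left.2 fun _ hi hq ↦ ?_
    obtain ⟨q, -, rfl⟩ := mem_map.1 hi
    exact B.color_notMem q p (hT p hq)
  have ends_sum : ∑ i ∈ ends, w i = ∑ p : Fin 2 × Fin r, v (B.vertex p.1 p.2) := by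
    simp [ends, Fintype.sum_prod_type, hw _ _ (B.map_vertex_mem _)]
  have meet_sum : ∑ p : Fin 2 × Fin r, v (B.meet p.2) = 0 := by
    simp [Fintype.sum_prod_type, two_nsmul, ZModModule.add_self]
  refine ⟨ends ∪ univ.biUnion T, ∑ p, #(T p), ?_, ?_⟩
  · rw [card_union_of_disjoint ends_disjoint, card_biUnion T_disjoint]
    simp [ends, add_comm]
  · convert IsSumOfAtMost.sum univ fun p _ ↦ hTv p using 1
    · exact mul_sum _ _ _
    · rw [sum_union ends_disjoint, sum_biUnion T_disjoint, ends_sum]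
      simp only [sum_add_distrib, meet_sum, add_zero]

end SumOfAtMost

section CoveringRadius

lemma card_lt_of_forall_subset_card_le {α W : Type*} [Fintype α] [Nontrivial α] [AddCommGroup W]
    [Module (ZMod 2) W] {v : α → W} {H : α → Finset (Finset α)} {δ : ℝ}
    (hH3 : ∀ i, ∀ e ∈ H i, #e = 3) (hH : ∀ i, (H i : Set (Finset α)).PairwiseDisjoint id)
    (hδ : ∀ i, δ * Fintype.card α ≤ #(H i)) (hv : ∀ i, ∀ e ∈ H i, v i = ∑ a ∈ e, v a)
    {I : Finset α} (hI : ∀ Q ⊆ I, ∀ m, IsSumOfAtMost v m (∑ i ∈ Q, v i) → #Q ≤ m) {s m : ℕ}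
    (hs : 4 * Real.logb 2 (Fintype.card α) ≤ δ * s)
    (hm : 12 * Real.logb 2 (Fintype.card α) < 2 ^ m) : #I < 24 * (m * s) := by
  classical
  by_contra! hms
  let E (i : I) : Finset (Finset α) := H i
  obtain ⟨B⟩ : Nonempty (RainbowBridge E 3) :=
    nonempty_rainbowBridge (E := E) (fun i ↦ hH i) (by norm_num) (fun i ↦ hH3 i) (fun i ↦ hδ i) hs
      (hm.trans_eq' (by norm_num)) (by simpa using hms)
  obtain ⟨Q, l, hQ, hQv⟩ := B.exists_isSumOfAtMost (fun i ↦ hH3 i)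
    (w := fun i : I ↦ v i) (fun i ↦ hv i)
  have := hI (Q.map (.subtype _)) (map_subtype_subset Q) l (by simpa using hQv)
  rw [card_map] at this
  omega

lemma three_halves_le_logb_two_natCast {n : ℕ} (hn : 3 ≤ n) : 3 / 2 ≤ Real.logb 2 n := by
  have log_three : Real.logb 2 ((2 : ℝ) ^ 3) ≤ Real.logb 2 ((3 : ℕ) ^ 2 : ℝ) :=
    Real.logb_le_logb_of_le one_lt_two (by norm_num) (by norm_num)
  rw [Real.logb_pow, Real.logb_pow, Real.logb_self_eq_one one_lt_two] at log_three
  have log_le : Real.logb 2 (3 : ℕ) ≤ Real.logb 2 n := monotone_logb_natCast one_lt_two hn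
  simp only [Nat.cast_ofNat] at log_three log_le
  linarith

lemma exists_blockSize_halvings {δ L : ℝ} (hδ0 : 0 < δ) (hδ1 : δ ≤ 1) (hL : 3 / 2 ≤ L) :
    ∃ s m : ℕ, 4 * L ≤ δ * s ∧ 12 * L < 2 ^ m ∧
      (24 * (m * s) : ℝ) ≤ 1320 * δ⁻¹ * L * Real.logb 2 L := by
  set M := Real.logb 2 L
  have hLM : (2 : ℝ) ^ M = L := Real.rpow_logb two_pos one_lt_two.ne' (by linarith)
  have hM : 1 / 2 ≤ M := by
    rw [Real.le_logb_iff_rpow_le one_lt_two (by linarith), ← Real.sqrt_eq_rpow]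
    exact (Real.sqrt_le_iff.2 ⟨by norm_num, by norm_num⟩).trans hL
  refine ⟨⌈4 * L / δ⌉₊, ⌈M⌉₊ + 4, (div_le_iff₀' hδ0).1 (Nat.le_ceil _), ?_, ?_⟩
  · have : L ≤ 2 ^ ⌈M⌉₊ := by
      rw [← hLM, ← Real.rpow_natCast]
      exact Real.rpow_le_rpow_of_exponent_le one_lt_two.le (Nat.le_ceil M)
    rw [pow_add]
    linarith
  · have s_le : (⌈4 * L / δ⌉₊ : ℝ) ≤ 5 * (L / δ) := by
      have : 1 ≤ L / δ := (one_le_div hδ0).2 (by linarith)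
      have := Nat.ceil_lt_add_one (a := 4 * L / δ) (by positivity)
      rw [mul_div_assoc] at this ⊢
      linarith
    have m_le : ((⌈M⌉₊ + 4 : ℕ) : ℝ) ≤ 11 * M := by
      have := Nat.ceil_lt_add_one (a := M) (by linarith)
      push_cast
      linarith
    calc (24 * ((⌈M⌉₊ + 4 : ℕ) * ⌈4 * L / δ⌉₊) : ℝ) ≤ 24 * (11 * M * (5 * (L / δ))) := by gcongr
      _ = 1320 * δ⁻¹ * L * M := by ring

end CoveringRadius

end LCC

theorem stmt1_general {α W : Type*} [Fintype α] [AddCommGroup W] [Module (ZMod 2) W] {v : α → W}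
    {H : α → Finset (Finset α)} {δ : ℝ} (hα : 3 ≤ Fintype.card α) (hδ0 : 0 < δ)
    (hH3 : ∀ i, ∀ e ∈ H i, e.card = 3) (hH : ∀ i, (H i : Set (Finset α)).PairwiseDisjoint id)
    (hδ : ∀ i, δ * Fintype.card α ≤ (H i).card) (hv : ∀ i, ∀ e ∈ H i, v i = ∑ a ∈ e, v a)
    {x : W} (hx : x ∈ Submodule.span (ZMod 2) (Set.range v)) :
    ∃ I : Finset α, (I.card : ℝ) ≤ 1320 * δ⁻¹ * Real.logb 2 (Fintype.card α) *
      Real.logb 2 (Real.logb 2 (Fintype.card α)) ∧ x = ∑ i ∈ I, v i := by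
  have : Nontrivial α := Fintype.one_lt_card_iff_nontrivial.1 (by omega)
  have hδ1 : δ ≤ 1 := by
    obtain ⟨i⟩ := (inferInstance : Nonempty α)
    have matching_le : (H i).card ≤ Fintype.card α :=
      LCC.card_le_card_of_pairwiseDisjoint_of_meets (hH i) fun e he ↦ by
        simpa using! Finset.card_pos.1 (by rw [hH3 i e he]; norm_num)
    exact le_of_mul_le_mul_right (by linarith [hδ i, (Nat.cast_le (α := ℝ)).2 matching_le])
      (Nat.cast_pos.2 Fintype.card_pos)
  obtain ⟨s, m, hs, hm, hsm⟩ :=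
    LCC.exists_blockSize_halvings hδ0 hδ1 (LCC.three_halves_le_logb_two_natCast hα)
  obtain ⟨I, hxI, hI⟩ := LCC.exists_sum_eq_forall_subset_card_le hx
  have card_lt := LCC.card_lt_of_forall_subset_card_le hH3 hH hδ hv hI hs hm
  exact ⟨I, le_trans (mod_cast card_lt.le) hsm, hxI⟩

/-- There is an absolute constant `C > 0` such that for any binary linear
`(3,δ)`-LCC with rows `v i`, every `x ∈ F₂ᵏ` is the sum of at most
`C · δ⁻² · log₂ n · log₂ log₂ n` of the rows `v i` (covering radius bound
for the dual code). -/
theorem stmt1 :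
    ∃ C : ℝ, 0 < C ∧
      ∀ (n k : ℕ) (δ : ℝ) (v : Fin n → Fin k → ZMod 2)
        (H : Fin n → Finset (Finset (Fin n))),
        3 ≤ n → 1 ≤ k → 0 < δ → δ < 1 → IsBinaryLCC 3 δ v H →
        ∀ x : Fin k → ZMod 2, ∃ I : Finset (Fin n),
          (I.card : ℝ) ≤ C * δ⁻¹ ^ 2 * Real.logb 2 n * Real.logb 2 (Real.logb 2 n) ∧
          x = ∑ i ∈ I, v i := by
  refine ⟨1320, by norm_num, fun n k δ v H hn _ hδ0 hδ1 ⟨hspan, hH3, hH, hδ, hv⟩ x ↦ ?_⟩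
  obtain ⟨I, hI, hxI⟩ := stmt1_general (x := x) (by simpa using hn) hδ0 hH3
    (fun i e he e' he' ↦ hH i e he e' he') (by simpa using hδ) hv (hspan ▸ Submodule.mem_top)
  refine ⟨I, hI.trans ?_, hxI⟩
  have hL := LCC.three_halves_le_logb_two_natCast hn
  have hM : 0 ≤ Real.logb 2 (Real.logb 2 n) := Real.logb_nonneg one_lt_two (by linarith)
  have hδ_inv : δ⁻¹ ≤ δ⁻¹ ^ 2 := le_self_pow₀ ((one_le_inv₀ hδ0).2 hδ1.le) two_ne_zero
  rw [Fintype.card_fin]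
  gcongr
end
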